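/- arXiv:0807.1967 — 4 statements merged into one kernel-verified Lean document; each statement's English description precedes it below -/
import Mathlib

section
/- The set of sums of squares of the field ℝ(X₁,…,Xₙ) of rational functions in n variables over ℝ is closed in ℝ(X₁,…,Xₙ) with respect to the topology of finitely open sets. -/
/-!
The complement of the cone of sums of squares is shown to be open in every finite-dimensional
subspace `U`. Let `q ≠ 0` be a common denominator of the elements of `U` and let `f ∈ U` not be a
sum of squares. Then the polynomial `q² f` is not a sum of squares of rational functions, so by
Artin's solution of Hilbert's 17th problem (`exists_eval_neg_of_not_isSumSq`) it is negative at some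
`a ∈ ℝⁿ`. The linear functional `u ↦ (q² u)(a)` on `U` is negative at `f` and nonnegative at every
sum of squares in `U` (`eval_nonneg_of_isSumSq`), so it separates `f` from the cone by an open set.

Artin's theorem has two halves. By `exists_realClosed_neg`, obtained from Zorn's lemma inside an
algebraic closure, a field element that is not a sum of squares is negative in some real closed
extension `Ω`. By `exists_eval_neg_of_extension` a polynomial over a real closed field `S` (here `ℝ`)
that is negative at a point of a real closed extension `Ω` is negative at a point of `S`.

The second half is an induction on the number of variables: the first coordinate `x` of the
point in `Ω`, if it is not in `S`, defines a cut of `S`, and by `sign_trichotomy` the order of `S(x)`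
is also induced by an ultrapower of `S` along an ultrafilter converging to that cut. By
`exists_embedding_of_same_order` every finite extension of `S(x)` inside `Ω` embeds into this
ultrapower, so a point with coordinates algebraic over `S(x)` can be specialised to `S`.

The embedding theorem is proved with the trace form of a finite extension `M / k`: its signature in a
real closed field `R ⊇ k` counts the `k`-embeddings `M → R`, since over the algebraically closed
field `R(i)` (`Cx.isAlgClosed`) the form is a sum of squares over all embeddings, and pairs of
complex conjugate embeddings contribute hyperbolic planes.
-/

open MvPolynomial MeasureTheory

noncomputable section

/-- The Euclidean (weak) topology on a real vector space; for finite-dimensional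
spaces this is the usual Euclidean topology. -/
def weakTop (V : Type*) [AddCommGroup V] [Module ℝ V] : TopologicalSpace V :=
  ⨅ L : V →ₗ[ℝ] ℝ, TopologicalSpace.induced L inferInstance

/-- The topology of finitely open sets: `O` is open iff its intersection with every
finite-dimensional subspace `U` is open in the Euclidean topology of `U`. -/
def finTop (E : Type*) [AddCommGroup E] [Module ℝ E] : TopologicalSpace E where
  IsOpen O := ∀ U : Submodule ℝ E, FiniteDimensional ℝ U →
    @IsOpen _ (weakTop U) ((Subtype.val : U → E) ⁻¹' O)
  isOpen_univ := by
    intro U _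
    letI := weakTop U
    rw [Set.preimage_univ]
    exact isOpen_univ
  isOpen_inter := by
    intro s t hs ht U hU
    letI := weakTop U
    rw [Set.preimage_inter]
    exact (hs U hU).inter (ht U hU)
  isOpen_sUnion := by
    intro s hs U hU
    letI := weakTop U
    rw [Set.preimage_sUnion]
    exact isOpen_biUnion fun t ht => hs t ht U hU

/-- The closure of a convex cone in the finest locally convex topology, via the dual
characterization: `x` lies in the closure iff `L x ≥ 0` for every linear functional `L`
nonnegative on the cone. -/
def dualClosure {E : Type*} [AddCommGroup E] [Module ℝ E] (C : Set E) : Set E :=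
  {x | ∀ L : E →ₗ[ℝ] ℝ, (∀ c ∈ C, 0 ≤ L c) → 0 ≤ L x}

set_option linter.unusedSectionVars false

/-! ### The field `R(i)` is algebraically closed -/

/-- `R(i)`, encoded as pairs `re + im • i` with `i² = -1`. -/
abbrev Cx (R : Type*) [Field R] := QuadraticAlgebra R (-1) 0

instance Cx.fact (R : Type*) [Field R] [LinearOrder R] [IsStrictOrderedRing R] :
    Fact (∀ r : R, r ^ 2 ≠ -1 + 0 * r) :=
  ⟨fun r h => by nlinarith [sq_nonneg r]⟩

section FTA
variable {R : Type*} [Field R] [LinearOrder R] [IsStrictOrderedRing R] [IsRealClosed R]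

lemma finrank_eq_one_of_odd (K : Type*) [Field K] [Algebra R K] [FiniteDimensional R K]
    (h : Odd (Module.finrank R K)) : Module.finrank R K = 1 := by
  obtain ⟨α, hα⟩ := Field.exists_primitive_element R K
  have hint : IsIntegral R α := Algebra.IsIntegral.isIntegral α
  rw [Field.primitive_element_iff_minpoly_natDegree_eq] at hα
  rw [← hα] at h ⊢
  obtain ⟨x, hx⟩ := IsRealClosed.exists_isRoot_of_odd_natDegree h
  exact Polynomial.natDegree_eq_of_degree_eq_some
    (Polynomial.degree_eq_one_of_irreducible_of_root (minpoly.irreducible hint) hx)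

lemma Cx.isSquare (z : Cx R) : IsSquare z := by
  obtain ⟨a, b⟩ := z
  obtain ⟨n, hn0, hn⟩ : ∃ n : R, 0 ≤ n ∧ n * n = a * a + b * b := by
    obtain ⟨n, hn⟩ := IsSquare.of_nonneg (add_nonneg (mul_self_nonneg a) (mul_self_nonneg b))
    exact ⟨|n|, abs_nonneg n, by rw [abs_mul_abs_self, hn]⟩
  have h1 : |a| ≤ n := abs_le_of_sq_le_sq (by nlinarith [mul_self_nonneg b]) hn0
  obtain ⟨h2, h3⟩ := abs_le.1 h1
  obtain ⟨u', hu'⟩ := IsSquare.of_nonneg (show 0 ≤ (n + a) / 2 by linarith)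
  obtain ⟨v', hv'⟩ := IsSquare.of_nonneg (show 0 ≤ (n - a) / 2 by linarith)
  have h4 : (2 * (u' * v')) * (2 * (u' * v')) = b * b := by
    have : (2 * (u' * v')) * (2 * (u' * v')) = 4 * ((u' * u') * (v' * v')) := by ring
    rw [this, ← hu', ← hv']
    linear_combination hn
  rcases mul_self_eq_mul_self_iff.1 h4 with h | h
  · refine ⟨⟨u', v'⟩, ?_⟩
    ext
    · simp; linear_combination hu' - hv'
    · simp; linear_combination -h
  · refine ⟨⟨u', -v'⟩, ?_⟩
    ext
    · simp; linear_combination hu' - hv'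
    · simp; linear_combination h

lemma Cx.finrank_ne_two (K : Type*) [Field K] [Algebra (Cx R) K]
    (h : Module.finrank (Cx R) K = 2) : False := by
  have : FiniteDimensional (Cx R) K := Module.finite_of_finrank_eq_succ h
  have : CharZero (Cx R) := charZero_of_injective_algebraMap (R := R) (algebraMap R (Cx R)).injective
  obtain ⟨α, hα⟩ := Field.exists_primitive_element (Cx R) K
  have hint : IsIntegral (Cx R) α := Algebra.IsIntegral.isIntegral α
  rw [Field.primitive_element_iff_minpoly_natDegree_eq] at hα
  rw [← hα] at h
  set p := minpoly (Cx R) α with hp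
  obtain ⟨s, hs⟩ := Cx.isSquare (discrim 1 (p.coeff 1) (p.coeff 0))
  obtain ⟨x, hx⟩ := exists_quadratic_eq_zero one_ne_zero ⟨s, hs⟩
  have hroot : p.IsRoot x := by
    have h2 : p.coeff 2 = 1 := by
      have := minpoly.monic hint
      rw [Polynomial.Monic, Polynomial.leadingCoeff] at this
      rw [← h]; exact this
    rw [Polynomial.IsRoot, Polynomial.eval_eq_sum_range, h]
    simp [Finset.sum_range_succ, h2]
    linear_combination hx
  have := Polynomial.natDegree_eq_of_degree_eq_some
    (Polynomial.degree_eq_one_of_irreducible_of_root (minpoly.irreducible hint) hroot)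
  rw [h] at this
  exact absurd this (by decide)

lemma Cx.surjective_of_isGalois (N : Type*) [Field N] [Algebra R N] [FiniteDimensional R N]
    [IsGalois R N] [Algebra (Cx R) N] [IsScalarTower R (Cx R) N] :
    Function.Surjective (algebraMap (Cx R) N) := by
  have : Fact (Nat.Prime 2) := ⟨Nat.prime_two⟩
  -- a Sylow 2-subgroup has a fixed field of odd degree, so the degree is a power of two
  obtain ⟨m, hm⟩ : ∃ m, Module.finrank R N = 2 ^ m := by
    obtain ⟨P⟩ : Nonempty (Sylow 2 Gal(N/R)) := inferInstance
    obtain ⟨m, hm⟩ := (IsPGroup.iff_card (p := 2)).1 P.2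
    refine ⟨m, ?_⟩
    have h1 := IntermediateField.finrank_fixedField_eq_card (F := R) (E := N) (P : Subgroup _)
    have h2 := Module.finrank_mul_finrank R (IntermediateField.fixedField (P : Subgroup Gal(N/R))) N
    have h3 := (P : Subgroup Gal(N/R)).card_mul_index
    rw [IsGalois.card_aut_eq_finrank, ← h2, h1, mul_comm] at h3
    have h4 := Nat.eq_of_mul_eq_mul_right Nat.card_pos h3
    have h5 := P.not_dvd_index
    rw [h4] at h5
    rw [← h2, h1, finrank_eq_one_of_odd _ (by rwa [← Nat.not_even_iff_odd, even_iff_two_dvd]),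
      one_mul]
    exact hm
  have : FiniteDimensional (Cx R) N := FiniteDimensional.right R (Cx R) N
  have : IsGalois (Cx R) N := IsGalois.tower_top_of_isGalois R (Cx R) N
  obtain ⟨j, -, hj⟩ := (Nat.dvd_prime_pow Nat.prime_two).1
    (hm ▸ Dvd.intro_left _ (Module.finrank_mul_finrank R (Cx R) N))
  have hj0 : j = 0 := by
    by_contra hne
    obtain ⟨i, rfl⟩ := Nat.exists_eq_succ_of_ne_zero hne
    obtain ⟨H, hH⟩ := Sylow.exists_subgroup_card_pow_prime (G := Gal(N/Cx R)) 2 (n := i)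
      (by rw [IsGalois.card_aut_eq_finrank, hj]; exact pow_dvd_pow _ (Nat.le_succ i))
    have h1 := IntermediateField.finrank_fixedField_eq_card (F := Cx R) (E := N) H
    have h2 := Module.finrank_mul_finrank (Cx R) (IntermediateField.fixedField H) N
    rw [h1, hH, hj, pow_succ, mul_comm] at h2
    exact Cx.finrank_ne_two _ (Nat.eq_of_mul_eq_mul_left (by positivity) h2)
  rw [hj0, pow_zero] at hj
  have h := bijective_algebraMap_of_linearEquiv
    (LinearEquiv.ofFinrankEq (R := Cx R) (M := Cx R) (M' := N) (by simp [hj]))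
  exact h.2

/-- The fundamental theorem of algebra for real closed fields. -/
instance Cx.isAlgClosed : IsAlgClosed (Cx R) := by
  refine IsAlgClosed.of_exists_root _ fun p hp hirr => ?_
  have : Fact (Irreducible p) := ⟨hirr⟩
  let E := AdjoinRoot p
  have : FiniteDimensional (Cx R) E := (AdjoinRoot.powerBasis hirr.ne_zero).finite
  have : FiniteDimensional R E := FiniteDimensional.trans R (Cx R) E
  let N := IntermediateField.normalClosure R E (AlgebraicClosure E)
  let _ : Algebra (Cx R) N := ((algebraMap E N).comp (algebraMap (Cx R) E)).toAlgebra
  have : IsScalarTower R (Cx R) N := IsScalarTower.of_algebraMap_eq fun x => by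
    show algebraMap R N x = algebraMap E N (algebraMap R E x)
    rw [← IsScalarTower.algebraMap_apply]
  have : IsGalois R N := { }
  obtain ⟨c, hc⟩ := Cx.surjective_of_isGalois (R := R) N (algebraMap E N (AdjoinRoot.root p))
  have hc' : algebraMap (Cx R) E c = AdjoinRoot.root p := (algebraMap E N).injective hc
  refine ⟨c, (algebraMap (Cx R) E).injective ?_⟩
  rw [map_zero, ← Polynomial.eval₂_at_apply, hc']
  exact AdjoinRoot.eval₂_root p

end FTA

/-! ### The signature of the trace form -/

section Signature
variable {k M R ι : Type*} [Field k] [CharZero k] [Field M] [Algebra k M] [FiniteDimensional k M]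
  [Field R] [LinearOrder R] [IsStrictOrderedRing R] [IsRealClosed R] [Algebra k R]

/-- The involution on `k`-embeddings `M → R(i)` induced by complex conjugation. -/
def conjHom (σ : M →ₐ[k] Cx R) : M →ₐ[k] Cx R where
  toFun m := star (σ m)
  map_one' := by simp
  map_mul' a b := by simp
  map_zero' := by simp
  map_add' a b := by simp
  commutes' r := by
    rw [σ.commutes]
    ext
    · simp
    · simp [IsScalarTower.algebraMap_apply k R (Cx R)]

lemma conjHom_conjHom (σ : M →ₐ[k] Cx R) : conjHom (conjHom σ) = σ := by
  ext1 m; exact star_star (σ m)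

/-- A conjugation-invariant embedding into `R(i)` takes values in `R`. -/
def homOfFixed (σ : M →ₐ[k] Cx R) (h : conjHom σ = σ) : M →ₐ[k] R :=
  have him (m : M) : (σ m).im = 0 := by
    have h1 : (star (σ m)).im = (σ m).im := congrArg (fun τ : M →ₐ[k] Cx R => (τ m).im) h
    rw [QuadraticAlgebra.im_star] at h1
    linarith
  { toFun := fun m => (σ m).re
    map_one' := by rw [map_one]; rfl
    map_mul' := fun a b => by simp [him]
    map_zero' := by simp
    map_add' := fun a b => by simp
    commutes' := fun r => by
      simp [IsScalarTower.algebraMap_apply k R (Cx R)] }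

open scoped Classical in
/-- A system of representatives for the pairs of complex conjugate embeddings. -/
lemma exists_half : ∃ T : Finset (M →ₐ[k] Cx R),
    (∀ σ, conjHom σ ≠ σ → σ ∈ T ∨ conjHom σ ∈ T) ∧
    (∀ σ ∈ T, conjHom σ ≠ σ) ∧
    2 * T.card + (Finset.univ.filter fun σ : M →ₐ[k] Cx R => conjHom σ = σ).card
      ≤ Module.finrank k M := by
  classical
  let r := Fintype.equivFin (M →ₐ[k] Cx R)
  let T : Finset (M →ₐ[k] Cx R) := Finset.univ.filter fun σ => r σ < r (conjHom σ)
  have hT {σ} : σ ∈ T ↔ r σ < r (conjHom σ) := by simp [T]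
  have hinj : Function.Injective (conjHom : (M →ₐ[k] Cx R) → _) :=
    Function.LeftInverse.injective conjHom_conjHom
  have hne {σ} (h : σ ∈ T) : conjHom σ ≠ σ := fun h' => by
    rw [hT, h'] at h; exact lt_irrefl _ h
  refine ⟨T, fun σ hσ => ?_, fun σ h => hne h, ?_⟩
  · rw [hT, hT, conjHom_conjHom]
    exact lt_or_gt_of_ne fun h => hσ (r.injective h).symm
  · have h1 : Disjoint T (T.image conjHom) := by
      rw [Finset.disjoint_left]
      intro σ h h'
      obtain ⟨τ, hτ, rfl⟩ := Finset.mem_image.1 h'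
      rw [hT] at h hτ
      rw [conjHom_conjHom] at h
      exact lt_asymm h hτ
    have h2 : Disjoint (T ∪ T.image conjHom)
        (Finset.univ.filter fun σ : M →ₐ[k] Cx R => conjHom σ = σ) := by
      rw [Finset.disjoint_left]
      intro σ h h'
      replace h' := (Finset.mem_filter.1 h').2
      rcases Finset.mem_union.1 h with h | h
      · exact hne h h'
      · obtain ⟨τ, hτ, rfl⟩ := Finset.mem_image.1 h
        exact hne hτ (hinj h')
    have h3 := Finset.card_le_univ ((T ∪ T.image conjHom) ∪
        (Finset.univ.filter fun σ : M →ₐ[k] Cx R => conjHom σ = σ))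
    rw [Finset.card_union_of_disjoint h2, Finset.card_union_of_disjoint h1,
      Finset.card_image_of_injective _ hinj, AlgHom.card] at h3
    omega

variable [Fintype ι] (e : ι → M) (d : ι → k)

/-- The `R`-linear extension of the embedding `σ`, in coordinates with respect to `e`. -/
def zval (c : ι → R) (σ : M →ₐ[k] Cx R) : Cx R := ∑ i, c i • σ (e i)

lemma re_zval_conj (c : ι → R) (σ : M →ₐ[k] Cx R) :
    (zval e c (conjHom σ)).re = (zval e c σ).re := by
  have h (z : Cx R) : z.re = QuadraticAlgebra.reₗ _ _ z := rfl
  simp only [h, zval, map_sum, map_smul]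
  refine Finset.sum_congr rfl fun i _ => ?_
  show _ • (star (σ (e i))).re = _ • (σ (e i)).re
  simp

lemma im_zval_conj (c : ι → R) (σ : M →ₐ[k] Cx R) :
    (zval e c (conjHom σ)).im = -(zval e c σ).im := by
  have h (z : Cx R) : z.im = QuadraticAlgebra.imₗ _ _ z := rfl
  simp only [h, zval, map_sum, map_smul, ← Finset.sum_neg_distrib]
  refine Finset.sum_congr rfl fun i _ => ?_
  show _ • (star (σ (e i))).im = -(_ • (σ (e i)).im)
  simp

/-- The trace form, diagonal in `e`, as a difference of sums of squares over the embeddings. -/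
lemma sum_re_sq_sub_im_sq
    (he : ∀ i j, i ≠ j → Algebra.trace k M (e i * e j) = 0)
    (hd : ∀ i, Algebra.trace k M (e i * e i) = d i) (c : ι → R) :
    ∑ σ : M →ₐ[k] Cx R, ((zval e c σ).re ^ 2 - (zval e c σ).im ^ 2)
      = ∑ i, c i ^ 2 * algebraMap k R (d i) := by
  classical
  have h1 (σ : M →ₐ[k] Cx R) : (zval e c σ).re ^ 2 - (zval e c σ).im ^ 2
      = QuadraticAlgebra.reₗ _ _ (zval e c σ * zval e c σ) := by
    simp [QuadraticAlgebra.reₗ]; ring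
  have h2 : ∑ σ : M →ₐ[k] Cx R, zval e c σ * zval e c σ
      = algebraMap R (Cx R) (∑ i, c i ^ 2 * algebraMap k R (d i)) := by
    have h3 (i j : ι) : ∑ σ : M →ₐ[k] Cx R, (c i • σ (e i)) * (c j • σ (e j))
        = algebraMap R (Cx R) (c i * c j * algebraMap k R (Algebra.trace k M (e i * e j))) := by
      rw [map_mul, ← IsScalarTower.algebraMap_apply k R (Cx R), trace_eq_sum_embeddings (Cx R),
        Finset.mul_sum]
      refine Finset.sum_congr rfl fun σ _ => ?_
      rw [map_mul σ, smul_mul_smul_comm, Algebra.smul_def]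
    simp only [zval, Finset.sum_mul_sum]
    rw [Finset.sum_comm, map_sum]
    refine Finset.sum_congr rfl fun i _ => ?_
    rw [Finset.sum_comm, Finset.sum_eq_single i]
    · rw [h3, hd]; ring_nf
    · intro j _ hj
      rw [h3, he i j hj.symm]; simp
    · simp
  simp only [h1]
  rw [← map_sum, h2]
  rfl

/-- Dimension count: if the `T.card` linear conditions `l (zval e c σ) = 0` cut out zero in the
coordinate subspace spanned by `P`, then `P.card ≤ T.card`. -/
lemma card_le_of_inj (P : Finset ι) (T : Finset (M →ₐ[k] Cx R)) (l : Cx R →ₗ[R] R)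
    (h : ∀ c : ι → R, (∀ i ∉ P, c i = 0) → (∀ σ ∈ T, l (zval e c σ) = 0) → c = 0) :
    P.card ≤ T.card := by
  classical
  let L : (ι → R) →ₗ[R] (T → R) × (↥(Pᶜ) → R) :=
    LinearMap.prod
      (LinearMap.pi fun σ => l ∘ₗ ∑ i, (LinearMap.proj (R := R) (φ := fun _ : ι => R) i).smulRight
        (σ.1 (e i)))
      (LinearMap.pi fun i => LinearMap.proj (R := R) (φ := fun _ : ι => R) i.1)
  have hL : Function.Injective L := by
    rw [injective_iff_map_eq_zero]
    intro c hc
    rw [Prod.ext_iff] at hc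
    refine h c (fun i hi => ?_) fun σ hσ => ?_
    · exact congrFun hc.2 ⟨i, by simpa using hi⟩
    · have := congrFun hc.1 ⟨σ, hσ⟩
      simpa [L, zval] using this
  have := LinearMap.finrank_le_finrank_of_injective hL
  rw [Module.finrank_prod, Module.finrank_fintype_fun_eq_card, Module.finrank_fintype_fun_eq_card,
    Module.finrank_fintype_fun_eq_card, Fintype.card_coe, Fintype.card_coe,
    Finset.card_compl] at this
  have := P.card_le_univ
  omega

/-- If `M` has no `k`-embedding into `R`, at most half of the trace form is positive. -/
lemma two_mul_card_pos_le
    (he : ∀ i j, i ≠ j → Algebra.trace k M (e i * e j) = 0)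
    (hd : ∀ i, Algebra.trace k M (e i * e i) = d i) (hno : IsEmpty (M →ₐ[k] R)) :
    2 * (Finset.univ.filter fun i => 0 < algebraMap k R (d i)).card ≤ Module.finrank k M := by
  obtain ⟨T, hT, -, hcard⟩ := exists_half (k := k) (M := M) (R := R)
  have hfix (σ : M →ₐ[k] Cx R) : conjHom σ ≠ σ := fun h => hno.elim (homOfFixed σ h)
  have := card_le_of_inj e (Finset.univ.filter fun i => 0 < algebraMap k R (d i)) T
    (QuadraticAlgebra.reₗ _ _) ?_
  · omega
  intro c hc h
  have h0 (σ : M →ₐ[k] Cx R) : (zval e c σ).re = 0 := by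
    rcases hT σ (hfix σ) with h' | h'
    · exact h _ h'
    · rw [← re_zval_conj]; exact h _ h'
  have hs := sum_re_sq_sub_im_sq e d he hd c
  simp only [h0] at hs
  have hle : ∑ σ : M →ₐ[k] Cx R, ((0 : R) ^ 2 - (zval e c σ).im ^ 2) ≤ 0 :=
    Finset.sum_nonpos fun σ _ => by nlinarith [sq_nonneg (zval e c σ).im]
  have hnn (i : ι) (_ : i ∈ Finset.univ) : 0 ≤ c i ^ 2 * algebraMap k R (d i) := by
    by_cases hi : 0 < algebraMap k R (d i)
    · positivity
    · rw [hc i (by simpa using hi)]; simp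
  have hz := (Finset.sum_eq_zero_iff_of_nonneg hnn).1
    (le_antisymm (hs ▸ hle) (Finset.sum_nonneg hnn))
  funext i
  by_cases hi : 0 < algebraMap k R (d i)
  · have := hz i (Finset.mem_univ i)
    simpa [hi.ne'] using this
  · exact hc i (by simpa using hi)

/-- If `M` has a `k`-embedding into `R`, less than half of the trace form is negative. -/
lemma two_mul_card_neg_lt
    (he : ∀ i j, i ≠ j → Algebra.trace k M (e i * e j) = 0)
    (hd : ∀ i, Algebra.trace k M (e i * e i) = d i) (τ : M →ₐ[k] R) :
    2 * (Finset.univ.filter fun i => algebraMap k R (d i) < 0).card < Module.finrank k M := by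
  classical
  obtain ⟨T, hT, hT', hcard⟩ := exists_half (k := k) (M := M) (R := R)
  have hpos : 0 < (Finset.univ.filter fun σ : M →ₐ[k] Cx R => conjHom σ = σ).card := by
    refine Finset.card_pos.2 ⟨(IsScalarTower.toAlgHom k R (Cx R)).comp τ, ?_⟩
    simp only [Finset.mem_filter, Finset.mem_univ, true_and]
    ext1 m
    show star (algebraMap R (Cx R) (τ m)) = algebraMap R (Cx R) (τ m)
    ext <;> simp
  have := card_le_of_inj e (Finset.univ.filter fun i => algebraMap k R (d i) < 0) T
    (QuadraticAlgebra.imₗ _ _) ?_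
  · omega
  intro c hc h
  have h0 (σ : M →ₐ[k] Cx R) : (zval e c σ).im = 0 := by
    have h1 := im_zval_conj e c σ
    by_cases hσ : conjHom σ = σ
    · rw [hσ] at h1
      linarith
    rcases hT σ hσ with h' | h'
    · exact h _ h'
    · have h2 : (zval e c (conjHom σ)).im = 0 := h _ h'
      linarith
  have hs := sum_re_sq_sub_im_sq e d he hd c
  simp only [h0] at hs
  have hle : 0 ≤ ∑ σ : M →ₐ[k] Cx R, ((zval e c σ).re ^ 2 - (0 : R) ^ 2) :=
    Finset.sum_nonneg fun σ _ => by nlinarith [sq_nonneg (zval e c σ).re]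
  have hnn (i : ι) (_ : i ∈ Finset.univ) : c i ^ 2 * algebraMap k R (d i) ≤ 0 := by
    by_cases hi : algebraMap k R (d i) < 0
    · nlinarith [sq_nonneg (c i)]
    · rw [hc i (by simpa using hi)]; simp
  have hz := (Finset.sum_eq_zero_iff_of_nonpos hnn).1
    (le_antisymm (Finset.sum_nonpos hnn) (hs ▸ hle))
  funext i
  by_cases hi : algebraMap k R (d i) < 0
  · have := hz i (Finset.mem_univ i)
    simpa [hi.ne] using this
  · exact hc i (by simpa using hi)

end Signature

/-- A finite extension of `k` that embeds into one real closed field over `k` embeds into every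
real closed field inducing the same order on `k`. -/
theorem exists_embedding_of_same_order {k M R₁ R₂ : Type*} [Field k] [CharZero k] [Field M]
    [Algebra k M] [FiniteDimensional k M]
    [Field R₁] [LinearOrder R₁] [IsStrictOrderedRing R₁] [IsRealClosed R₁] [Algebra k R₁]
    [Field R₂] [LinearOrder R₂] [IsStrictOrderedRing R₂] [IsRealClosed R₂] [Algebra k R₂]
    (hsign : ∀ a : k, 0 < algebraMap k R₁ a → 0 < algebraMap k R₂ a)
    (τ : M →ₐ[k] R₁) : Nonempty (M →ₐ[k] R₂) := by
  classical
  by_contra hno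
  rw [not_nonempty_iff] at hno
  let _ : Invertible (2 : k) := invertibleOfNonzero two_ne_zero
  obtain ⟨v, hv⟩ := LinearMap.BilinForm.exists_orthogonal_basis
    (B := Algebra.traceForm k M) ⟨fun x y => congrArg (Algebra.trace k M) (mul_comm x y)⟩
  have hv0 (i) : Algebra.trace k M (v i * v i) ≠ 0 :=
    LinearMap.IsOrthoᵢ.not_isOrtho_basis_self_of_separatingLeft (B := Algebra.traceForm k M) hv
      (traceForm_nondegenerate k M).1 i
  have he (i j) (hij : i ≠ j) : Algebra.trace k M (v i * v j) = 0 := hv hij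
  let d i := Algebra.trace k M (v i * v i)
  have h1 := two_mul_card_neg_lt v d he (fun _ => rfl) τ
  have h2 := two_mul_card_pos_le v d he (fun _ => rfl) hno
  have h3 : (Finset.univ : Finset (Fin (Module.finrank k M))) ⊆
      (Finset.univ.filter fun i => algebraMap k R₁ (d i) < 0) ∪
      (Finset.univ.filter fun i => 0 < algebraMap k R₂ (d i)) := by
    intro i _
    have : algebraMap k R₁ (d i) ≠ 0 := by simpa using hv0 i
    rcases lt_or_gt_of_ne this with h | h
    · simp [h]
    · simp [hsign _ h]
  have h4 := (Finset.card_le_card h3).trans (Finset.card_union_le _ _)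
  rw [Finset.card_univ, Fintype.card_fin] at h4
  omega

/-! ### Ultrapowers and cuts of real closed fields -/

section Ultrapower
variable {α S : Type*} [Field S] [LinearOrder S] [IsStrictOrderedRing S] [IsRealClosed S]

/-- An ultrapower of a real closed field is real closed. -/
instance germ_isRealClosed (φ : Ultrafilter α) : IsRealClosed (Filter.Germ (φ : Filter α) S) := by
  refine IsRealClosed.of_linearOrderedField ?_ ?_
  · intro x hx
    induction x using Filter.Germ.inductionOn with | _ f
    replace hx : ∀ᶠ s in (φ : Filter α), 0 ≤ f s := Filter.Germ.coe_le.1 hx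
    have h (s : α) : ∃ r, 0 ≤ f s → f s = r * r := by
      by_cases h0 : 0 ≤ f s
      · obtain ⟨r, hr⟩ := IsSquare.of_nonneg h0
        exact ⟨r, fun _ => hr⟩
      · exact ⟨0, fun h => absurd h h0⟩
    choose r hr using h
    exact ⟨(r : Filter.Germ (φ : Filter α) S), Filter.Germ.coe_eq.2 (hx.mono hr)⟩
  · intro p hp
    obtain ⟨q, hq, hdeg⟩ := Polynomial.exists_degree_eq_of_mem_lifts
      (f := Filter.Germ.coeRingHom (R := S) (φ : Filter α)) (p := p) (by
        rw [Polynomial.lifts_iff_coeff_lifts]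
        intro n
        exact (p.coeff n).inductionOn fun f => ⟨f, rfl⟩)
    have hn : q.natDegree = p.natDegree := Polynomial.natDegree_eq_of_degree_eq hdeg
    have hp0 : p ≠ 0 := by rintro rfl; simp at hp
    have hev : ∀ᶠ s in (φ : Filter α), q.leadingCoeff s ≠ 0 := by
      rw [Ultrafilter.eventually_not]
      intro h
      apply hp0
      rw [← Polynomial.leadingCoeff_eq_zero, Polynomial.leadingCoeff, ← hn, ← hq,
        Polynomial.coeff_map]
      exact Filter.Germ.coe_eq.2 h
    have h (s : α) : ∃ r, q.leadingCoeff s ≠ 0 →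
        (q.map (Pi.evalRingHom (fun _ => S) s)).eval r = 0 := by
      by_cases h0 : q.leadingCoeff s ≠ 0
      · obtain ⟨r, hr⟩ := IsRealClosed.exists_isRoot_of_odd_natDegree
          (f := q.map (Pi.evalRingHom (fun _ => S) s)) (by
            rw [Polynomial.natDegree_map_of_leadingCoeff_ne_zero _ h0, hn]
            exact hp)
        exact ⟨r, fun _ => hr⟩
      · exact ⟨0, fun h => absurd h h0⟩
    choose r hr using h
    refine ⟨Filter.Germ.coeRingHom (φ : Filter α) r, ?_⟩
    rw [Polynomial.IsRoot, ← hq, Polynomial.eval_map, Polynomial.eval₂_at_apply]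
    refine Filter.Germ.coe_eq.2 (hev.mono fun s hs => ?_)
    have := hr s hs
    rw [Polynomial.eval_map] at this
    have h2 := Polynomial.eval₂_at_apply (p := q) (Pi.evalRingHom (fun _ => S) s) r
    exact h2.symm.trans this
end Ultrapower

section Cut
variable {S Ω : Type*} [Field S] [LinearOrder S] [IsStrictOrderedRing S] [IsRealClosed S]
  [Field Ω] [LinearOrder Ω] [IsStrictOrderedRing Ω] [Algebra S Ω]

lemma algebraMap_pos' {s : S} (h : 0 < s) : 0 < algebraMap S Ω s := by
  obtain ⟨r, rfl⟩ := IsSquare.of_nonneg h.le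
  have : r ≠ 0 := by rintro rfl; simp at h
  rw [map_mul]
  exact mul_self_pos.2 (by simpa using this)

lemma lt_of_algebraMap_lt {s t : S} (h : algebraMap S Ω s < algebraMap S Ω t) : s < t := by
  by_contra! h'
  rcases h'.eq_or_lt with rfl | h'
  · exact lt_irrefl _ h
  · have := algebraMap_pos' (Ω := Ω) (sub_pos.2 h')
    rw [map_sub] at this
    linarith

/-- The filter on `S` of neighbourhoods of the cut determined by `x ∈ Ω`. -/
def cutFilter (S : Type*) {Ω : Type*} [Field S] [LinearOrder S] [Field Ω] [LinearOrder Ω]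
    [Algebra S Ω] (x : Ω) : Filter S where
  sets := {U | ∃ C D : Finset S, (∀ c ∈ C, algebraMap S Ω c < x) ∧
    (∀ d ∈ D, x < algebraMap S Ω d) ∧ ∀ s, (∀ c ∈ C, c < s) → (∀ d ∈ D, s < d) → s ∈ U}
  univ_sets := ⟨∅, ∅, by simp⟩
  sets_of_superset := by
    rintro U V ⟨C, D, h1, h2, h3⟩ hUV
    exact ⟨C, D, h1, h2, fun s hs hs' => hUV (h3 s hs hs')⟩
  inter_sets := by
    classical
    rintro U V ⟨C, D, h1, h2, h3⟩ ⟨C', D', h1', h2', h3'⟩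
    refine ⟨C ∪ C', D ∪ D', ?_, ?_, ?_⟩
    · intro c hc
      rcases Finset.mem_union.1 hc with hc | hc
      exacts [h1 c hc, h1' c hc]
    · intro c hc
      rcases Finset.mem_union.1 hc with hc | hc
      exacts [h2 c hc, h2' c hc]
    · intro s hs hs'
      exact ⟨h3 s (fun c hc => hs c (Finset.mem_union_left _ hc))
          (fun c hc => hs' c (Finset.mem_union_left _ hc)),
        h3' s (fun c hc => hs c (Finset.mem_union_right _ hc))
          (fun c hc => hs' c (Finset.mem_union_right _ hc))⟩

instance cutFilter_neBot (x : Ω) : (cutFilter S x).NeBot := by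
  rw [← Filter.empty_mem_iff_bot.not.trans Filter.neBot_iff.symm]
  rintro ⟨C, D, h1, h2, h3⟩
  obtain ⟨m, hm, hm'⟩ := Order.exists_between_finsets C D fun c hc d hd =>
    lt_of_algebraMap_lt ((h1 c hc).trans (h2 d hd))
  exact h3 m hm hm'

/-- A polynomial over a real closed field has a constant sign near the cut of `x`, equal to its
sign at `x`: it is a product of constants, linear factors and sums `(X - a)² + b²`. -/
lemma sign_trichotomy (x : Ω) (hx : x ∉ Set.range (algebraMap S Ω)) (g : Polynomial S) :
    g = 0 ∨ (0 < Polynomial.aeval x g ∧ ∀ᶠ s in cutFilter S x, 0 < g.eval s) ∨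
      (Polynomial.aeval x g < 0 ∧ ∀ᶠ s in cutFilter S x, g.eval s < 0) := by
  induction hn : g.natDegree using Nat.strong_induction_on generalizing g with
  | _ n ih =>
  by_cases hdeg : g.natDegree = 0
  · obtain ⟨c, rfl⟩ := Polynomial.natDegree_eq_zero.1 hdeg
    rcases lt_trichotomy c 0 with h | h | h
    · refine Or.inr (Or.inr ⟨?_, by simp [h]⟩)
      have := algebraMap_pos' (Ω := Ω) (neg_pos.2 h)
      rw [map_neg] at this
      simpa using this
    · simp [h]
    · refine Or.inr (Or.inl ⟨?_, by simp [h]⟩)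
      simpa using algebraMap_pos' (Ω := Ω) h
  -- a factor of degree one or two comes from a root in `S(i)`
  obtain ⟨Q, hQg, hQdeg, hQ⟩ : ∃ Q : Polynomial S, Q ∣ g ∧ 0 < Q.natDegree ∧
      ((0 < Polynomial.aeval x Q ∧ ∀ᶠ s in cutFilter S x, 0 < Q.eval s) ∨
      (Polynomial.aeval x Q < 0 ∧ ∀ᶠ s in cutFilter S x, Q.eval s < 0)) := by
    obtain ⟨z, hz⟩ := IsAlgClosed.exists_aeval_eq_zero (Cx S) g
      (fun h => hdeg (Polynomial.natDegree_eq_of_degree_eq_some h))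
    obtain ⟨a, b⟩ := z
    by_cases hb : b = 0
    · subst hb
      refine ⟨Polynomial.X - Polynomial.C a, ?_, by simp, ?_⟩
      · rw [Polynomial.dvd_iff_isRoot]
        have : (⟨a, 0⟩ : Cx S) = algebraMap S (Cx S) a := rfl
        rw [this, Polynomial.aeval_algebraMap_apply] at hz
        simpa using hz
      · rcases lt_trichotomy x (algebraMap S Ω a) with h | h | h
        · exact Or.inr ⟨by simpa using h, ∅, {a}, by simp, by simpa using h, by simp⟩
        · exact absurd ⟨a, h.symm⟩ hx
        · exact Or.inl ⟨by simpa using h, {a}, ∅, by simpa using h, by simp, by simp⟩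
    · have hb2 : 0 < b ^ 2 := by positivity
      let Q : Polynomial S := (Polynomial.X - Polynomial.C a) ^ 2 + Polynomial.C (b ^ 2)
      have hQd : Q.natDegree = 2 := by
        simp only [Q]; compute_degree!
      have hQm : Q.Monic := by
        simp only [Q]; monicity!
      refine ⟨Q, ?_, by omega, Or.inl ⟨?_, ?_⟩⟩
      · rw [← Polynomial.modByMonic_eq_zero_iff_dvd hQm]
        have hr := Polynomial.natDegree_modByMonic_lt g hQm (by
          intro h; rw [h] at hQd; simp at hQd)
        have hz2 : Polynomial.aeval (⟨a, b⟩ : Cx S) (g %ₘ Q) = 0 := by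
          rw [Polynomial.modByMonic_eq_sub_mul_div g, map_sub, map_mul, hz]
          have : Polynomial.aeval (⟨a, b⟩ : Cx S) Q = 0 := by
            simp only [Q, map_add, map_pow, map_sub, Polynomial.aeval_X, Polynomial.aeval_C]
            ext
            · simp [pow_two, QuadraticAlgebra.algebraMap_eq]
            · simp [pow_two, QuadraticAlgebra.algebraMap_eq]
          rw [this]; simp
        generalize g %ₘ Q = r at hr hz2
        rw [hQd] at hr
        obtain ⟨u, v, rfl⟩ := Polynomial.exists_eq_X_add_C_of_natDegree_le_one
          (Nat.lt_succ_iff.1 hr)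
        simp only [map_add, map_mul, Polynomial.aeval_X, Polynomial.aeval_C,
          QuadraticAlgebra.algebraMap_eq] at hz2
        have him := congrArg QuadraticAlgebra.im hz2
        have hre := congrArg QuadraticAlgebra.re hz2
        simp [hb] at him hre
        rw [him] at hre ⊢
        simp at hre
        simp [hre]
      · have : 0 < algebraMap S Ω (b ^ 2) := algebraMap_pos' hb2
        simp only [Q, map_add, map_pow, map_sub, Polynomial.aeval_X, Polynomial.aeval_C] at this ⊢
        positivity
      · refine Filter.Eventually.of_forall fun s => ?_
        simp only [Q, Polynomial.eval_add, Polynomial.eval_pow, Polynomial.eval_sub,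
          Polynomial.eval_X, Polynomial.eval_C]
        positivity
  obtain ⟨h, rfl⟩ := hQg
  by_cases h0 : h = 0
  · simp [h0]
  have hQ0 : Q ≠ 0 := by rintro rfl; simp at hQdeg
  have := ih h.natDegree (by rw [← hn, Polynomial.natDegree_mul hQ0 h0]; omega) h rfl
  simp only [map_mul, Polynomial.eval_mul]
  rcases hQ with ⟨q1, q2⟩ | ⟨q1, q2⟩ <;> rcases this with h' | ⟨p1, p2⟩ | ⟨p1, p2⟩
  · exact absurd h' h0
  · exact Or.inr (Or.inl ⟨mul_pos q1 p1, by filter_upwards [q2, p2] with s using mul_pos⟩)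
  · exact Or.inr (Or.inr ⟨mul_neg_of_pos_of_neg q1 p1,
      by filter_upwards [q2, p2] with s using mul_neg_of_pos_of_neg⟩)
  · exact absurd h' h0
  · exact Or.inr (Or.inr ⟨mul_neg_of_neg_of_pos q1 p1,
      by filter_upwards [q2, p2] with s using mul_neg_of_neg_of_pos⟩)
  · exact Or.inr (Or.inl ⟨mul_pos_of_neg_of_neg q1 p1,
      by filter_upwards [q2, p2] with s using mul_pos_of_neg_of_neg⟩)

end Cut

/-! ### Specialising one transcendental -/

section Transfer

/-- The relative algebraic closure of a subfield in a real closed field is real closed. -/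
lemma isRealClosed_algebraicClosure (k Ω : Type*) [Field k] [Field Ω] [LinearOrder Ω]
    [IsStrictOrderedRing Ω] [IsRealClosed Ω] [Algebra k Ω] :
    IsRealClosed (algebraicClosure k Ω) := by
  have key (p : Polynomial (algebraicClosure k Ω)) (hp : p ≠ 0) (r : Ω)
      (hr : Polynomial.aeval r p = 0) : r ∈ algebraicClosure k Ω := by
    have : IsAlgebraic (algebraicClosure k Ω) r := ⟨p, hp, hr⟩
    exact mem_algebraicClosure_iff.2 (this.restrictScalars k)
  refine IsRealClosed.of_linearOrderedField ?_ ?_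
  · intro a ha
    obtain ⟨r, hr⟩ := IsSquare.of_nonneg (x := (a : Ω)) ha
    refine ⟨⟨r, key (Polynomial.X ^ 2 - Polynomial.C a)
      (Polynomial.X_pow_sub_C_ne_zero (by norm_num) _) r ?_⟩, Subtype.ext hr⟩
    have h : algebraMap (algebraicClosure k Ω) Ω a = r * r := hr
    simp [h, pow_two]
  · intro p hp
    obtain ⟨r, hr⟩ := IsRealClosed.exists_isRoot_of_odd_natDegree
      (f := p.map (algebraMap (algebraicClosure k Ω) Ω)) (by rwa [Polynomial.natDegree_map])
    have hr' : Polynomial.aeval r p = 0 := by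
      rwa [Polynomial.IsRoot, Polynomial.eval_map_algebraMap] at hr
    have hp0 : p ≠ 0 := by rintro rfl; simp at hp
    refine ⟨⟨r, key p hp0 r hr'⟩, ?_⟩
    apply (algebraMap (algebraicClosure k Ω) Ω).injective
    rw [map_zero, ← Polynomial.aeval_algebraMap_apply_eq_algebraMap_eval]
    exact hr'

/-- If `k` sits with the same order in its real closure `K` and in an ultrapower of `S`, then a
polynomial over `S` that is negative at a point of `K` is negative at a point of `S`. -/
lemma exists_eval_neg_of_ultrapower {S k K α : Type*}
    [Field S] [LinearOrder S] [IsStrictOrderedRing S] [IsRealClosed S]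
    [Field k] [CharZero k] [Field K] [LinearOrder K] [IsStrictOrderedRing K] [IsRealClosed K]
    [Algebra k K] [Algebra.IsAlgebraic k K] (φ : Ultrafilter α)
    [Algebra k (Filter.Germ (φ : Filter α) S)] (ι : S →+* k)
    (hι : ∀ s, algebraMap k (Filter.Germ (φ : Filter α) S) (ι s) = (↑s : Filter.Germ _ S))
    (hsign : ∀ a : k, 0 < algebraMap k K a → 0 < algebraMap k (Filter.Germ (φ : Filter α) S) a)
    {n : ℕ} (f : MvPolynomial (Fin n) S) (y : Fin n → K)
    (hf : eval₂ ((algebraMap k K).comp ι) y f < 0) : ∃ a : Fin n → S, eval a f < 0 := by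
  obtain ⟨w, hw⟩ := IsSquare.of_nonneg (neg_nonneg.2 hf.le)
  let M := IntermediateField.adjoin k (Set.range y ∪ {w})
  have hfin : FiniteDimensional k M := IntermediateField.finiteDimensional_adjoin
    fun x _ => Algebra.IsIntegral.isIntegral x
  obtain ⟨ψ⟩ := exists_embedding_of_same_order (M := M) hsign M.val
  let y' : Fin n → M := fun i => ⟨y i, IntermediateField.subset_adjoin _ _ (Or.inl ⟨i, rfl⟩)⟩
  let w' : M := ⟨w, IntermediateField.subset_adjoin _ _ (Or.inr rfl)⟩
  have h1 : eval₂ ((algebraMap k M).comp ι) y' f = -(w' * w') := by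
    apply M.val.injective
    have := hom_eval₂ f ((algebraMap k M).comp ι) (M.val : M →+* K) y'
    refine this.trans ?_
    rw [map_neg, map_mul]
    exact (neg_eq_iff_eq_neg.1 hw)
  have hw0 : w' ≠ 0 := by
    intro h
    have : w = 0 := congrArg Subtype.val h
    rw [this] at hw
    simp at hw
    exact hf.ne hw
  have h2 : eval₂ ((algebraMap k (Filter.Germ (φ : Filter α) S)).comp ι) (fun i => ψ (y' i)) f
      < 0 := by
    have := hom_eval₂ f ((algebraMap k M).comp ι) ψ.toRingHom y'
    rw [← RingHom.comp_assoc, show (ψ.toRingHom).comp (algebraMap k M) = algebraMap k _ from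
      ψ.comp_algebraMap] at this
    refine lt_of_eq_of_lt this.symm ?_
    rw [h1]
    change ψ (-(w' * w')) < 0
    rw [map_neg, map_mul, neg_lt_zero]
    exact mul_self_pos.2 (by simpa using hw0)
  have hex (i : Fin n) : ∃ u : α → S, ψ (y' i) = (u : Filter.Germ (φ : Filter α) S) :=
    (ψ (y' i)).inductionOn fun u => ⟨u, rfl⟩
  choose u hu using hex
  -- evaluation in the ultrapower is pointwise evaluation
  have h3 : eval₂ ((algebraMap k (Filter.Germ (φ : Filter α) S)).comp ι) (fun i => ψ (y' i)) f
      = ((fun s => eval (fun i => u i s) f : α → S) : Filter.Germ (φ : Filter α) S) := by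
    have e1 := hom_eval₂ f (algebraMap S (α → S)) (Filter.Germ.coeRingHom (φ : Filter α)) u
    have e2 : (Filter.Germ.coeRingHom (φ : Filter α)).comp (algebraMap S (α → S)) =
        (algebraMap k (Filter.Germ (φ : Filter α) S)).comp ι := by
      ext s; exact (hι s).symm
    rw [e2] at e1
    have e3 : (fun i => ψ (y' i)) = fun i => Filter.Germ.coeRingHom (φ : Filter α) (u i) := by
      funext i; exact hu i
    rw [e3]
    refine e1.symm.trans ?_
    change ((_ : α → S) : Filter.Germ (φ : Filter α) S) = _
    congr 1
    funext s
    have := hom_eval₂ f (algebraMap S (α → S)) (Pi.evalRingHom (fun _ => S) s) u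
    exact this
  rw [h3] at h2
  have h4 : ∀ᶠ s in (φ : Filter α), eval (fun i => u i s) f < 0 := Filter.Germ.coe_lt.1 h2
  obtain ⟨s, hs⟩ := h4.exists
  exact ⟨_, hs⟩

end Transfer

section CutField
variable {S Ω : Type*} [Field S] [LinearOrder S] [IsStrictOrderedRing S] [IsRealClosed S]
  [Field Ω] [LinearOrder Ω] [IsStrictOrderedRing Ω] [Algebra S Ω]

/-- The germ at the cut of `x` of a polynomial function. -/
def cutGerm (S : Type*) {Ω : Type*} [Field S] [LinearOrder S] [IsStrictOrderedRing S]
    [IsRealClosed S] [Field Ω] [LinearOrder Ω] [IsStrictOrderedRing Ω] [Algebra S Ω] (x : Ω) :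
    Polynomial S →+* Filter.Germ (Ultrafilter.of (cutFilter S x) : Filter S) S :=
  (Filter.Germ.coeRingHom _).comp (RingHom.pi fun s => Polynomial.evalRingHom s)

lemma cutGerm_pos {x : Ω} (hx : x ∉ Set.range (algebraMap S Ω)) {g : Polynomial S}
    (h : 0 < Polynomial.aeval x g) : 0 < cutGerm S x g := by
  rcases sign_trichotomy x hx g with rfl | ⟨_, h2⟩ | ⟨h1, _⟩
  · simp at h
  · exact Filter.Germ.coe_lt.2 (Ultrafilter.of_le _ h2)
  · exact absurd h h1.not_gt

lemma aeval_cut_injective {x : Ω} (hx : x ∉ Set.range (algebraMap S Ω)) :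
    Function.Injective (Polynomial.aeval (R := S) x : Polynomial S →+* Ω) := by
  rw [injective_iff_map_eq_zero]
  intro g hg
  replace hg : Polynomial.aeval x g = 0 := hg
  rcases sign_trichotomy x hx g with rfl | ⟨h2, _⟩ | ⟨h1, _⟩
  · rfl
  · exact absurd hg h2.ne'
  · exact absurd hg h1.ne

lemma cutGerm_injective {x : Ω} (hx : x ∉ Set.range (algebraMap S Ω)) :
    Function.Injective (cutGerm S x) := by
  rw [injective_iff_map_eq_zero]
  intro g hg
  by_contra h0
  rcases sign_trichotomy x hx g with rfl | ⟨h2, _⟩ | ⟨h1, _⟩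
  · exact h0 rfl
  · exact (cutGerm_pos hx h2).ne' hg
  · have := cutGerm_pos (g := -g) hx (by simpa using h1)
    simp [hg] at this

/-- The embeddings of `S(X)` into `Ω`, by `X ↦ x`, and into the ultrapower at the cut of `x` induce
the same order. -/
lemma cut_sign {x : Ω} (hx : x ∉ Set.range (algebraMap S Ω)) (a : FractionRing (Polynomial S))
    (ha : 0 < IsFractionRing.lift (aeval_cut_injective hx) a) :
    0 < IsFractionRing.lift (cutGerm_injective hx) a := by
  obtain ⟨p, q, hq, rfl⟩ := IsFractionRing.div_surjective (A := Polynomial S) a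
  have hq0 : q ≠ 0 := nonZeroDivisors.ne_zero hq
  rw [map_div₀, IsFractionRing.lift_algebraMap, IsFractionRing.lift_algebraMap] at ha ⊢
  rw [div_eq_mul_inv] at ha ⊢
  have hqx : Polynomial.aeval x q ≠ 0 := fun h =>
    hq0 ((injective_iff_map_eq_zero _).1 (aeval_cut_injective hx) q h)
  have hqg : cutGerm S x q ≠ 0 := fun h =>
    hq0 ((injective_iff_map_eq_zero _).1 (cutGerm_injective hx) q h)
  have h1 : 0 < Polynomial.aeval x (p * q) := by
    have h2 : 0 < Polynomial.aeval x p * (Polynomial.aeval x q)⁻¹ := ha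
    have := mul_pos h2 (mul_self_pos.2 hqx)
    rw [map_mul]
    convert this using 1
    field_simp
  have h3 := mul_pos (cutGerm_pos hx h1) (mul_self_pos.2 (inv_ne_zero hqg))
  rw [map_mul] at h3
  convert h3 using 1
  field_simp

end CutField

/-! ### Transfer between real closed fields -/

/-- Tarski transfer for one strict polynomial inequality: a polynomial over a real closed field
`S` that takes a negative value in a real closed extension takes one in `S`. -/
theorem exists_eval_neg_of_extension.{u} (n : ℕ) : ∀ (S Ω : Type u)
    [Field S] [LinearOrder S] [IsStrictOrderedRing S] [IsRealClosed S]
    [Field Ω] [LinearOrder Ω] [IsStrictOrderedRing Ω] [IsRealClosed Ω]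
    (ι : S →+* Ω) (f : MvPolynomial (Fin n) S) (x : Fin n → Ω) (_ : eval₂ ι x f < 0),
    ∃ a : Fin n → S, eval a f < 0 := by
  induction n with
  | zero =>
    intro S Ω _ _ _ _ _ _ _ _ ι f x hf
    letI := ι.toAlgebra
    obtain ⟨c, rfl⟩ := C_surjective (Fin 0) f
    refine ⟨Fin.elim0, ?_⟩
    rw [eval₂_C] at hf
    rw [eval_C]
    apply lt_of_algebraMap_lt (Ω := Ω)
    rw [map_zero]
    exact hf
  | succ n ih =>
    intro S Ω _ _ _ _ _ _ _ _ ι f x hf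
    letI := ι.toAlgebra
    -- specialising the first variable and applying the induction hypothesis over a field `K`
    -- containing the first coordinate
    have descend (K : Type u) [Field K] [LinearOrder K] [IsStrictOrderedRing K] [IsRealClosed K]
        (κ : K →+* Ω) (μ : S →+* K) (hμ : κ.comp μ = ι) (t : K) (ht : κ t = x 0) :
        ∃ b : Fin n → K, eval₂ μ (Fin.cons t b : Fin (n + 1) → K) f < 0 := by
      let g : MvPolynomial (Fin n) K := eval₂ (C.comp μ) (Fin.cons (C t) X) f
      have hg : eval₂ κ (fun i => x i.succ) g = eval₂ ι x f := by
        have := hom_eval₂ f (C.comp μ) (eval₂Hom κ fun i => x i.succ)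
          (Fin.cons (C t) X : Fin (n + 1) → MvPolynomial (Fin n) K)
        refine this.trans ?_
        congr 1
        · rw [← hμ]; ext s; simp
        · funext i
          refine Fin.cases ?_ (fun j => ?_) i <;> simp [ht]
      obtain ⟨b, hb⟩ := ih K Ω κ g _ (hg.trans_lt hf)
      refine ⟨b, lt_of_eq_of_lt ?_ hb⟩
      have := hom_eval₂ f (C.comp μ) (eval b)
          (Fin.cons (C t) X : Fin (n + 1) → MvPolynomial (Fin n) K)
      refine Eq.trans ?_ this.symm
      congr 1
      · ext s; simp
      · funext i
        refine Fin.cases ?_ (fun j => ?_) i <;> simp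
    by_cases hx : x 0 ∈ Set.range (algebraMap S Ω)
    · obtain ⟨t, ht⟩ := hx
      obtain ⟨b, hb⟩ := descend S ι (RingHom.id S) (by simp) t ht
      exact ⟨Fin.cons t b, hb⟩
    · let k := FractionRing (Polynomial S)
      letI : Algebra k Ω := (IsFractionRing.lift (aeval_cut_injective hx)).toAlgebra
      let φ := Ultrafilter.of (cutFilter S (x 0))
      letI : Algebra k (Filter.Germ (φ : Filter S) S) :=
        (IsFractionRing.lift (cutGerm_injective hx)).toAlgebra
      let K := algebraicClosure k Ω
      haveI : IsRealClosed K := isRealClosed_algebraicClosure k Ω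
      let ν : S →+* k := (algebraMap (Polynomial S) k).comp Polynomial.C
      have hk (p : Polynomial S) : algebraMap k Ω (algebraMap (Polynomial S) k p) =
          Polynomial.aeval (x 0) p :=
        IsFractionRing.lift_algebraMap (aeval_cut_injective hx) p
      have hG (p : Polynomial S) : algebraMap k (Filter.Germ (φ : Filter S) S)
          (algebraMap (Polynomial S) k p) = cutGerm S (x 0) p :=
        IsFractionRing.lift_algebraMap (cutGerm_injective hx) p
      haveI : CharZero k := charZero_of_injective_ringHom (f := ν) ν.injective
      obtain ⟨b, hb⟩ := descend K (algebraMap K Ω) ((algebraMap k K).comp ν) (by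
          ext s
          refine (hk (Polynomial.C s)).trans ?_
          rw [Polynomial.aeval_C]; rfl)
        (algebraMap k K (algebraMap (Polynomial S) k Polynomial.X))
        ((hk Polynomial.X).trans (Polynomial.aeval_X _))
      refine exists_eval_neg_of_ultrapower (k := k) (K := K) φ ν (fun s => ?_) (fun a ha => ?_)
        f _ hb
      · refine (hG _).trans ?_
        change ((_ : S → S) : Filter.Germ (φ : Filter S) S) = _
        refine Filter.Germ.coe_eq.2 (Filter.Eventually.of_forall fun r => ?_)
        simp
      · exact cut_sign hx a ha

/-! ### Real closed extensions of semireal fields -/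

section Semireal
variable {E : Type*} [Field E]

lemma isSumSq_neg_one_of_both {a : E} (ha : a ≠ 0) (h1 : IsSumSq a) (h2 : IsSumSq (-a)) :
    IsSumSq (-1 : E) := by
  have : (-1 : E) = -a * a * (a⁻¹ * a⁻¹) := by field_simp
  rw [this]
  exact (h2.mul h1).mul (IsSumSq.mul_self _)

/-- A real closed field is ordered by its squares. -/
lemma exists_linearOrder (R : Type*) [Field R] [IsRealClosed R] :
    ∃ _ : LinearOrder R, IsStrictOrderedRing R := by
  classical
  let C : RingCone R :=
    { Subsemiring.sumSq R with
      eq_zero_of_mem_of_neg_mem' := by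
        intro a ha hna
        by_contra h0
        exact IsSemireal.not_isSumSq_neg_one R (isSumSq_neg_one_of_both h0
          (Subsemiring.mem_sumSq.1 ha) (Subsemiring.mem_sumSq.1 hna)) }
  haveI : HasMemOrNegMem C := ⟨fun a => by
    rcases IsRealClosed.isSquare_or_isSquare_neg a with h | h
    · exact Or.inl (Subsemiring.mem_sumSq.2 h.isSumSq)
    · exact Or.inr (Subsemiring.mem_sumSq.2 h.isSumSq)⟩
  letI : LinearOrder R := LinearOrder.mkOfAddGroupCone C
  haveI : IsOrderedRing R := IsOrderedRing.mkOfCone C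
  exact ⟨inferInstance, IsOrderedRing.toIsStrictOrderedRing R⟩

/-- If `-1` is a sum of squares then so is everything, by
`f = ((f + 1) / 2)² - ((f - 1) / 2)²`. -/
lemma isSumSq_of_neg_one [CharZero E] (h : IsSumSq (-1 : E)) (f : E) : IsSumSq f := by
  have : f = (f + 1) / 2 * ((f + 1) / 2) + (-1) * ((f - 1) / 2 * ((f - 1) / 2)) := by
    field_simp; ring
  rw [this]
  exact (IsSumSq.mul_self _).add (h.mul (IsSumSq.mul_self _))

lemma IsSumSq.map' {A B : Type*} [Semiring A] [Semiring B] (φ : A →+* B) {a : A}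
    (h : IsSumSq a) : IsSumSq (φ a) := by
  induction h with
  | zero => simp
  | sq_add a _ ih =>
    rw [map_add, map_mul]
    exact IsSumSq.sq_add _ ih

/-- Sums of squares of a simple algebraic extension lift to the polynomial ring. -/
lemma exists_polynomial_sumSq {A : Type*} [Field A] [Algebra E A] {r : A} (hr : IsAlgebraic E r)
    {z : IntermediateField.adjoin E {r}} (hz : IsSumSq z) :
    ∃ σ : Polynomial E, IsSumSq σ ∧ Polynomial.aeval r σ = (z : A) := by
  induction hz with
  | zero => exact ⟨0, IsSumSq.zero, by simp⟩
  | sq_add a _ ih =>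
    obtain ⟨σ, h1, h2⟩ := ih
    have ha : (a : A) ∈ (IntermediateField.adjoin E {r}).toSubalgebra := a.2
    rw [IntermediateField.adjoin_simple_toSubalgebra_of_isAlgebraic hr,
      Algebra.adjoin_singleton_eq_range_aeval] at ha
    obtain ⟨p, hp⟩ := ha
    replace hp : Polynomial.aeval r p = (a : A) := hp
    exact ⟨p * p + σ, IsSumSq.sq_add p h1, by simp [hp, h2]⟩

/-- Adjoining `√a` to a field keeps `-1` from being a sum of squares unless `-a` is one. -/
lemma isSumSq_neg_of_sqrt [CharZero E] {A : Type*} [Field A] [Algebra E A] {r : A} {a : E}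
    (hr : r * r = algebraMap E A a) (h : IsSumSq (-1 : IntermediateField.adjoin E {r})) :
    IsSumSq (-a) := by
  by_cases h1 : IsSumSq (-1 : E)
  · exact isSumSq_of_neg_one h1 _
  let m : Polynomial E := Polynomial.X ^ 2 - Polynomial.C a
  have hm : m.Monic := Polynomial.monic_X_pow_sub_C a (by norm_num)
  have hmd : m.natDegree = 2 := Polynomial.natDegree_X_pow_sub_C
  have hmr : Polynomial.aeval r m = 0 := by simp [m, pow_two, hr]
  have halg : IsAlgebraic E r := ⟨m, hm.ne_zero, hmr⟩
  obtain ⟨σ, hσ, hσr⟩ := exists_polynomial_sumSq halg h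
  by_cases hrE : ∃ r₀ : E, algebraMap E A r₀ = r
  · obtain ⟨r₀, rfl⟩ := hrE
    exfalso
    apply h1
    have h2 : σ.eval r₀ = -1 := by
      apply (algebraMap E A).injective
      rw [← Polynomial.aeval_algebraMap_apply_eq_algebraMap_eval, hσr]
      simp
    rw [← h2]
    exact IsSumSq.map' (Polynomial.evalRingHom r₀) hσ
  have key : ∃ s t w : E, IsSumSq s ∧ IsSumSq t ∧
      Polynomial.aeval r σ = algebraMap E A (s + t * a) + algebraMap E A w * r := by
    clear hσr
    induction hσ with
    | zero => exact ⟨0, 0, 0, IsSumSq.zero, IsSumSq.zero, by simp⟩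
    | sq_add p _ ih =>
      obtain ⟨s, t, w, hs, ht, e⟩ := ih
      have hp : Polynomial.aeval r p = Polynomial.aeval r (p %ₘ m) := by
        rw [Polynomial.modByMonic_eq_sub_mul_div p, map_sub, map_mul, hmr]; simp
      have hd := Polynomial.natDegree_modByMonic_lt p hm (by
          intro h; rw [h] at hmd; simp at hmd)
      rw [hmd] at hd
      obtain ⟨v, u, huv⟩ := Polynomial.exists_eq_X_add_C_of_natDegree_le_one
          (Nat.lt_succ_iff.1 hd)
      rw [huv] at hp
      refine ⟨u * u + s, v * v + t, 2 * u * v + w, IsSumSq.sq_add u hs, IsSumSq.sq_add v ht, ?_⟩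
      rw [map_add, map_mul, hp, e]
      simp only [map_add, map_mul, Polynomial.aeval_X, Polynomial.aeval_C, map_ofNat]
      linear_combination (algebraMap E A v) ^ 2 * hr
  obtain ⟨s, t, w, hs, ht, e⟩ := key
  rw [hσr] at e
  have hw : w = 0 := by
    by_contra hw
    refine hrE ⟨(-1 - (s + t * a)) / w, ?_⟩
    have hw' : algebraMap E A w ≠ 0 := by simpa using hw
    rw [map_div₀, div_eq_iff hw', map_sub, map_neg, map_one]
    have e' : (-1 : A) = algebraMap E A (s + t * a) + algebraMap E A w * r := e
    rw [e']; ring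
  have e2 : (-1 : E) = s + t * a := by
    apply (algebraMap E A).injective
    rw [hw] at e
    simpa using e
  have ht0 : t ≠ 0 := by
    rintro rfl
    apply h1
    rw [e2]; simpa using hs
  have : -a = (1 * 1 + s) * t * (t⁻¹ * t⁻¹) := by
    field_simp
    linear_combination e2
  rw [this]
  exact ((IsSumSq.sq_add 1 hs).mul ht).mul (IsSumSq.mul_self _)

lemma eq_zero_of_isSumSq (h1 : ¬ IsSumSq (-1 : E)) {a b : E} (ha : IsSumSq a) (hb : IsSumSq b)
    (h : a + b = 0) : a = 0 := by
  by_contra h0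
  exact h1 (isSumSq_neg_one_of_both h0 ha (by rwa [neg_eq_of_add_eq_zero_right h]))

/-- Sums of squares of polynomials of degree `< d` have even degree `< 2 * d - 1`. -/
lemma even_natDegree_of_sumSq (h1 : ¬ IsSumSq (-1 : E)) {d : ℕ} {σ : Polynomial E}
    (hσ : σ ∈ AddSubmonoid.closure {q : Polynomial E | ∃ p, p.natDegree < d ∧ q = p * p}) :
    σ = 0 ∨ IsSumSq σ.leadingCoeff ∧ ∃ e < d, σ.natDegree = 2 * e := by
  induction hσ using AddSubmonoid.closure_induction with
  | mem x hx =>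
    obtain ⟨p, hp, rfl⟩ := hx
    refine Or.inr ⟨by simp, _, hp, ?_⟩
    rw [← pow_two, Polynomial.natDegree_pow]
  | zero => simp
  | add x y _ _ hx hy =>
    rcases hx with rfl | ⟨hx, e, he, hxe⟩
    · simpa using hy
    rcases hy with rfl | ⟨hy, e', he', hye⟩
    · rw [add_zero]; exact Or.inr ⟨hx, e, he, hxe⟩
    rcases lt_trichotomy e e' with h | rfl | h
    · have hlt : x.natDegree < y.natDegree := by omega
      refine Or.inr ⟨?_, e', he', ?_⟩
      · rwa [Polynomial.leadingCoeff_add_of_degree_lt (Polynomial.degree_lt_degree hlt)]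
      · rw [Polynomial.natDegree_add_eq_right_of_natDegree_lt hlt, hye]
    · by_cases h0 : x.leadingCoeff + y.leadingCoeff = 0
      · have := eq_zero_of_isSumSq h1 hx hy h0
        have hx0 := Polynomial.leadingCoeff_eq_zero.1 this
        rw [this, zero_add] at h0
        have hy0 := Polynomial.leadingCoeff_eq_zero.1 h0
        simp [hx0, hy0]
      · have hc : (x + y).coeff (2 * e) = x.leadingCoeff + y.leadingCoeff := by
          rw [Polynomial.coeff_add, Polynomial.leadingCoeff, Polynomial.leadingCoeff, hxe, hye]
        have hd : (x + y).natDegree = 2 * e := by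
          apply le_antisymm
          · refine (Polynomial.natDegree_add_le x y).trans ?_
            omega
          · exact Polynomial.le_natDegree_of_ne_zero (by rwa [hc])
        refine Or.inr ⟨?_, e, he, hd⟩
        rw [Polynomial.leadingCoeff, hd, hc]
        exact hx.add hy
    · have hlt : y.natDegree < x.natDegree := by omega
      refine Or.inr ⟨?_, e, he, ?_⟩
      · rwa [Polynomial.leadingCoeff_add_of_degree_lt' (Polynomial.degree_lt_degree hlt)]
      · rw [Polynomial.natDegree_add_eq_left_of_natDegree_lt hlt, hxe]

/-- Springer's descent: over a semireal field no polynomial of odd degree divides `1 + Σ pᵢ²`.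
After reducing the `pᵢ` the cofactor has smaller odd degree. -/
lemma not_dvd_one_add_sumSq (h1 : ¬ IsSumSq (-1 : E)) (g : Polynomial E) (hg : Odd g.natDegree)
    (σ : Polynomial E) (hσ : IsSumSq σ) : ¬ g ∣ 1 + σ := by
  induction hn : g.natDegree using Nat.strong_induction_on generalizing g σ with
  | _ d ih =>
  intro hdvd
  have hd0 : g.natDegree ≠ 0 := by rintro h; rw [h] at hg; simp at hg
  have hg0 : g ≠ 0 := by rintro rfl; simp at hd0
  let Cl := AddSubmonoid.closure {q : Polynomial E | ∃ p, p.natDegree < d ∧ q = p * p}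
  have hred : ∃ τ ∈ Cl, IsSumSq τ ∧ g ∣ σ - τ := by
    clear hdvd
    induction hσ with
    | zero => exact ⟨0, zero_mem _, IsSumSq.zero, by simp⟩
    | sq_add p _ ihσ =>
      obtain ⟨τ, hτ, hτs, hτd⟩ := ihσ
      refine ⟨p % g * (p % g) + τ, add_mem (AddSubmonoid.subset_closure ⟨_, ?_, rfl⟩) hτ,
        IsSumSq.sq_add _ hτs, ?_⟩
      · rw [← hn]; exact Polynomial.natDegree_mod_lt p hd0
      · have h2 : g ∣ p - p % g := ⟨p / g, by
          have := EuclideanDomain.div_add_mod p g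
          linear_combination -this⟩
        have h3 := dvd_add (h2.mul_right (p + p % g)) hτd
        convert h3 using 1
        ring
  obtain ⟨τ, hτ, hτs, hτd⟩ := hred
  have hdvd' : g ∣ 1 + τ := by
    have := dvd_sub hdvd hτd
    convert this using 1
    ring
  have h1τ : 1 + τ ≠ 0 := by
    intro h
    apply h1
    have h2 : τ.eval 0 = -1 := by
      have := congrArg (Polynomial.eval 0) h
      simp at this
      linear_combination this
    rw [← h2]
    exact IsSumSq.map' (Polynomial.evalRingHom 0) hτs
  have hmem : 1 + τ ∈ Cl := add_mem (AddSubmonoid.subset_closure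
    ⟨1, by rw [Polynomial.natDegree_one]; omega, by simp⟩) hτ
  obtain ⟨q, hq⟩ := hdvd'
  rcases even_natDegree_of_sumSq h1 hmem with h | ⟨_, e, he, hdeg⟩
  · exact h1τ h
  have hq0 : q ≠ 0 := by rintro rfl; simp at hq; exact h1τ hq
  rw [hq, Polynomial.natDegree_mul hg0 hq0] at hdeg
  refine ih q.natDegree (by omega) q ?_ τ hτs rfl ⟨g, by rw [hq, mul_comm]⟩
  obtain ⟨c, hc⟩ := hg
  exact ⟨e - c - 1, by omega⟩

end Semireal

section RealClosure

/-- A sum of squares in the union of a chain of fields is one in a member of the chain. -/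
lemma isSumSq_sSup {F A : Type*} [Field F] [Field A] [Algebra F A]
    {c : Set (IntermediateField F A)} (hc : IsChain (· ≤ ·) c) (hne : c.Nonempty)
    {z : (sSup c : IntermediateField F A)} (hz : IsSumSq z) :
    ∃ E ∈ c, ∃ z' : E, (z' : A) = z ∧ IsSumSq z' := by
  haveI : Nonempty c := hne.to_subtype
  have hdir : Directed (· ≤ ·) (fun E : c => (E : IntermediateField F A)) :=
    hc.directed
  have hmem (a : (sSup c : IntermediateField F A)) : ∃ E ∈ c, (a : A) ∈ E := by
    obtain ⟨a, ha⟩ := a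
    change ∃ E ∈ c, a ∈ E
    rw [sSup_eq_iSup', ← SetLike.mem_coe, IntermediateField.coe_iSup_of_directed hdir] at ha
    obtain ⟨E, hE⟩ := Set.mem_iUnion.1 ha
    exact ⟨E, E.2, hE⟩
  induction hz with
  | zero =>
    obtain ⟨E, hE⟩ := hne
    exact ⟨E, hE, 0, rfl, IsSumSq.zero⟩
  | sq_add a _ ih =>
    obtain ⟨E, hE, z', hz', hs⟩ := ih
    obtain ⟨E', hE', ha⟩ := hmem a
    rcases hc.total hE hE' with h | h
    · refine ⟨E', hE', ⟨a, ha⟩ * ⟨a, ha⟩ + IntermediateField.inclusion h z', ?_,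
        IsSumSq.sq_add _ (IsSumSq.map' (IntermediateField.inclusion h : E →+* E') hs)⟩
      simp [hz']
    · refine ⟨E, hE, ⟨a, h ha⟩ * ⟨a, h ha⟩ + z', ?_, IsSumSq.sq_add _ hs⟩
      simp [hz']

/-- Artin: an element that is not a sum of squares is negative in some real closed extension. -/
theorem exists_realClosed_neg.{u} (F : Type u) [Field F] [CharZero F] (f : F)
    (hf : ¬ IsSumSq f) :
    ∃ (Ω : Type u) (_ : Field Ω) (_ : LinearOrder Ω) (_ : IsStrictOrderedRing Ω)
      (_ : IsRealClosed Ω) (ι : F →+* Ω), ι f < 0 := by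
  let A := AlgebraicClosure F
  obtain ⟨r, hr⟩ := IsAlgClosed.exists_eq_mul_self (algebraMap F A (-f))
  have hr0 : ¬ IsSumSq (-1 : IntermediateField.adjoin F {r}) := fun h => hf (by
    simpa using isSumSq_neg_of_sqrt hr.symm h)
  obtain ⟨E, hle, hmax⟩ := zorn_le_nonempty₀
    {E : IntermediateField F A | ¬ IsSumSq (-1 : E)} (by
      intro c hc hchain E₀ hE₀
      refine ⟨sSup c, fun h => ?_, fun E hE => le_sSup hE⟩
      obtain ⟨E, hE, z, hz, hs⟩ := isSumSq_sSup hchain ⟨E₀, hE₀⟩ h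
      refine hc hE ?_
      convert hs
      exact Subtype.ext (by simpa using hz.symm)) _ hr0
  have h1 : ¬ IsSumSq (-1 : E) := hmax.prop
  -- an element of the algebraic closure outside `E` generates a field in which `-1` is a sum
  -- of squares
  have hgen (s : A) (hs : s ∉ E) : IsSumSq (-1 : IntermediateField.adjoin E {s}) := by
    by_contra hcon
    apply hs
    have : IntermediateField.restrictScalars F (IntermediateField.adjoin E {s}) ≤ E :=
      hmax.2 (y := IntermediateField.restrictScalars F (IntermediateField.adjoin E {s})) hcon
        (fun a ha => (IntermediateField.adjoin E {s}).algebraMap_mem ⟨a, ha⟩)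
    exact this (IntermediateField.mem_adjoin_simple_self E s)
  have hsq (a : E) : IsSquare a ∨ IsSumSq (-a) := by
    obtain ⟨s, hs⟩ := IsAlgClosed.exists_eq_mul_self (algebraMap E A a)
    by_cases hsE : s ∈ E
    · exact Or.inl ⟨⟨s, hsE⟩, Subtype.ext hs⟩
    · exact Or.inr (isSumSq_neg_of_sqrt hs.symm (hgen s hsE))
  have hrc : IsRealClosed E :=
    { IsSemireal.of_not_isSumSq_neg_one h1 with
      isSquare_or_isSquare_neg := fun a => by
        rcases hsq a with h | h
        · exact Or.inl h
        rcases hsq (-a) with h' | h'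
        · exact Or.inr h'
        rw [neg_neg] at h'
        by_cases ha : a = 0
        · exact Or.inl (by rw [ha]; exact ⟨0, by simp⟩)
        · exact absurd (isSumSq_neg_one_of_both ha h' h) h1
      exists_isRoot_of_odd_natDegree := by
        intro g hg
        induction hn : g.natDegree using Nat.strong_induction_on generalizing g with
        | _ d ih =>
        have hd0 : g.natDegree ≠ 0 := by rintro h; rw [h] at hg; simp at hg
        have hg0 : g ≠ 0 := by rintro rfl; simp at hd0
        by_cases hirr : Irreducible g
        · obtain ⟨s, hs⟩ := IsAlgClosed.exists_aeval_eq_zero A g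
            (fun h => hd0 (Polynomial.natDegree_eq_of_degree_eq_some h))
          by_cases hsE : s ∈ E
          · refine ⟨⟨s, hsE⟩, ?_⟩
            apply (algebraMap E A).injective
            rw [map_zero, ← Polynomial.aeval_algebraMap_apply_eq_algebraMap_eval]
            exact hs
          · obtain ⟨σ, hσ, hσs⟩ := exists_polynomial_sumSq ⟨g, hg0, hs⟩ (hgen s hsE)
            refine absurd ?_ (not_dvd_one_add_sumSq h1 g hg σ hσ)
            rw [← hirr.dvd_iff_aeval_eq_zero hs]
            simp [hσs]
        · have hunit : ¬ IsUnit g := fun h => hd0 (Polynomial.natDegree_eq_zero_of_isUnit h)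
          rw [irreducible_iff] at hirr
          push Not at hirr
          obtain ⟨a, b, rfl, ha, hb⟩ := hirr hunit
          have ha0 := left_ne_zero_of_mul hg0
          have hb0 := right_ne_zero_of_mul hg0
          have hda : 0 < a.natDegree := Polynomial.natDegree_pos_iff_degree_pos.2
            (Polynomial.degree_pos_of_ne_zero_of_nonunit ha0 ha)
          have hdb : 0 < b.natDegree := Polynomial.natDegree_pos_iff_degree_pos.2
            (Polynomial.degree_pos_of_ne_zero_of_nonunit hb0 hb)
          rw [Polynomial.natDegree_mul ha0 hb0] at hg hn
          rcases Nat.even_or_odd a.natDegree with hpa | hpa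
          · obtain ⟨t, ht⟩ := ih b.natDegree (by omega)
              (Nat.odd_add.1 (by rwa [add_comm]) |>.2 hpa) rfl
            exact ⟨t, by simp [Polynomial.IsRoot.def.1 ht]⟩
          · obtain ⟨t, ht⟩ := ih a.natDegree (by omega) hpa rfl
            exact ⟨t, by simp [Polynomial.IsRoot.def.1 ht]⟩ }
  obtain ⟨ord, hord⟩ := exists_linearOrder E
  refine ⟨E, inferInstance, ord, hord, hrc, algebraMap F E, ?_⟩
  have hrE : r ∈ E := hle (IntermediateField.mem_adjoin_simple_self F r)
  have hre : algebraMap F E (-f) = ⟨r, hrE⟩ * ⟨r, hrE⟩ := Subtype.ext hr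
  have hne : (⟨r, hrE⟩ : E) ≠ 0 := by
    intro h
    rw [h, mul_zero] at hre
    have : f = 0 := by simpa using hre
    exact hf (this ▸ IsSumSq.zero)
  have := mul_self_pos.2 hne
  rw [← hre, map_neg] at this
  exact neg_pos.1 this

end RealClosure

/-! ### The real numbers are real closed -/

instance real_isRealClosed : IsRealClosed ℝ := by
  refine IsRealClosed.of_linearOrderedField ?_ ?_
  · intro x hx
    exact ⟨√x, (Real.mul_self_sqrt hx).symm⟩
  · have key (p : Polynomial ℝ) (hp : Odd p.natDegree) (hlc : 0 ≤ p.leadingCoeff) :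
        ∃ x, p.IsRoot x := by
      have hd : 0 < p.natDegree := hp.pos
      have hdeg : 0 < p.degree := Polynomial.natDegree_pos_iff_degree_pos.1 hd
      have h1 := p.tendsto_atTop_of_leadingCoeff_nonneg hdeg hlc
      -- for odd degree `p(-x)` has the opposite leading coefficient
      have hcd : (p.comp (-Polynomial.X)).natDegree = p.natDegree := by
        rw [Polynomial.natDegree_comp]; simp
      have h2 := (p.comp (-Polynomial.X)).tendsto_atBot_of_leadingCoeff_nonpos
        (Polynomial.natDegree_pos_iff_degree_pos.1 (hcd ▸ hd)) (by
          rw [Polynomial.leadingCoeff_comp (by simp)]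
          simp [hp.neg_one_pow, hlc])
      obtain ⟨a, ha⟩ := (h1.eventually_ge_atTop 0).exists
      obtain ⟨b, hb⟩ := (h2.eventually_le_atBot 0).exists
      rw [Polynomial.eval_comp] at hb
      exact mem_range_of_exists_le_of_exists_ge p.continuous ⟨_, hb⟩ ⟨a, ha⟩
    intro p hp
    rcases le_total 0 p.leadingCoeff with h | h
    · exact key p hp h
    · obtain ⟨x, hx⟩ := key (-p) (by simpa using hp) (by simpa using h)
      exact ⟨x, by simpa using hx⟩

/-! ### Hilbert's 17th problem and closedness -/

section Closedness

/-- A polynomial that is negative somewhere is not a sum of squares of rational functions.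
This is the easy half of Hilbert's 17th problem. -/
lemma eval_nonneg_of_isSumSq {n : ℕ} {g : MvPolynomial (Fin n) ℝ}
    (hg : IsSumSq (algebraMap _ (FractionRing (MvPolynomial (Fin n) ℝ)) g)) (a : Fin n → ℝ) :
    0 ≤ eval a g := by
  have clearDenom {z : FractionRing (MvPolynomial (Fin n) ℝ)} (hz : IsSumSq z) :
      ∃ h τ : MvPolynomial (Fin n) ℝ, h ≠ 0 ∧ IsSumSq τ ∧
        algebraMap _ (FractionRing (MvPolynomial (Fin n) ℝ)) τ =
          algebraMap _ (FractionRing (MvPolynomial (Fin n) ℝ)) (h * h) * z := by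
    induction hz with
    | zero => exact ⟨1, 0, one_ne_zero, IsSumSq.zero, by simp⟩
    | sq_add b _ ih =>
      obtain ⟨h, τ, hh, hτ, e⟩ := ih
      obtain ⟨p, q, hq, rfl⟩ := IsFractionRing.div_surjective (A := MvPolynomial (Fin n) ℝ) b
      have hq0 : q ≠ 0 := nonZeroDivisors.ne_zero hq
      have hq1 : algebraMap _ (FractionRing (MvPolynomial (Fin n) ℝ)) q ≠ 0 := by
        simpa using hq0
      refine ⟨h * q, (h * p) * (h * p) + (q * q) * τ, mul_ne_zero hh hq0,
        IsSumSq.sq_add _ ((IsSumSq.mul_self q).mul hτ), ?_⟩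
      simp only [map_add, map_mul] at e ⊢
      rw [e]
      field_simp
  obtain ⟨h, τ, hh, hτ, e⟩ := clearDenom hg
  rw [← map_mul] at e
  have e' : τ = h * h * g := IsFractionRing.injective _ _ e
  by_contra! hneg
  -- `h` vanishes on a box around `a`, hence `h = 0`
  have hopen : IsOpen {b : Fin n → ℝ | eval b g < 0} :=
    isOpen_lt (MvPolynomial.continuous_eval g) continuous_const
  obtain ⟨ε, hε, hball⟩ := Metric.isOpen_iff.1 hopen a hneg
  apply hh
  refine MvPolynomial.funext_set (fun i => Metric.ball (a i) ε) (fun i => ?_) fun b hb => ?_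
  · rw [Real.ball_eq_Ioo]
    exact Set.Ioo_infinite (by linarith)
  · rw [← ball_pi a hε] at hb
    have h1 : eval b g < 0 := hball hb
    have h2 : 0 ≤ eval b τ := (IsSumSq.map' (eval b) hτ).nonneg
    rw [e', map_mul, map_mul] at h2
    rw [map_zero]
    by_contra h3
    have := mul_neg_of_pos_of_neg (mul_self_pos.2 h3) h1
    linarith

/-- The hard half of Hilbert's 17th problem (Artin): a polynomial that is not a sum of squares of
rational functions is negative somewhere. -/
theorem exists_eval_neg_of_not_isSumSq {n : ℕ} {p : MvPolynomial (Fin n) ℝ}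
    (hp : ¬ IsSumSq (algebraMap _ (FractionRing (MvPolynomial (Fin n) ℝ)) p)) :
    ∃ a : Fin n → ℝ, eval a p < 0 := by
  have : CharZero (FractionRing (MvPolynomial (Fin n) ℝ)) :=
    charZero_of_injective_algebraMap (algebraMap ℝ _).injective
  obtain ⟨Ω, _, _, _, _, ι, hι⟩ := exists_realClosed_neg _ _ hp
  let κ := ι.comp (algebraMap (MvPolynomial (Fin n) ℝ) _)
  refine exists_eval_neg_of_extension n ℝ Ω (κ.comp C) p (fun i => κ (X i)) ?_
  have := hom_eval₂ p C κ X
  rw [eval₂_eta] at this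
  rw [← this]
  exact hι

lemma isOpen_weakTop_neg {V : Type*} [AddCommGroup V] [Module ℝ V] (L : V →ₗ[ℝ] ℝ) :
    @IsOpen _ (weakTop V) {v | L v < 0} := by
  letI := weakTop V
  have : Continuous L := continuous_iff_le_induced.2 (iInf_le _ L)
  exact isOpen_lt this continuous_const

/-- The set of sums of squares of `ℝ(X₁,…,Xₙ)` is closed in the
topology of finitely open sets. -/
theorem sumsOfSquares_isClosed_finTop (n : ℕ) :
    @IsClosed _ (finTop (FractionRing (MvPolynomial (Fin n) ℝ)))
      {σ : FractionRing (MvPolynomial (Fin n) ℝ) | IsSumSq σ} := by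
  set P := MvPolynomial (Fin n) ℝ
  set F := FractionRing P
  refine (@isOpen_compl_iff _ _ (finTop F)).1 fun U hU => ?_
  letI := weakTop U
  rw [isOpen_iff_forall_mem_open]
  intro f hf
  -- a common denominator of `U`
  obtain ⟨q, hq0, hq⟩ : ∃ q : P, q ≠ 0 ∧ ∀ u ∈ U, ∃ p : P, algebraMap P F p =
      algebraMap P F q * u := by
    obtain ⟨s, hs⟩ := (Submodule.fg_iff_finiteDimensional U).2 hU
    obtain ⟨q, hq⟩ := IsLocalization.exist_integer_multiples_of_finset (nonZeroDivisors P) s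
    refine ⟨q, nonZeroDivisors.ne_zero q.2, fun u hu => ?_⟩
    rw [← hs] at hu
    induction hu using Submodule.span_induction with
    | mem x hx =>
      obtain ⟨p, hp⟩ := hq x hx
      exact ⟨p, by rw [hp, Algebra.smul_def]⟩
    | zero => exact ⟨0, by simp⟩
    | add x y _ _ hx hy =>
      obtain ⟨p, hp⟩ := hx
      obtain ⟨p', hp'⟩ := hy
      exact ⟨p + p', by rw [map_add, hp, hp', mul_add]⟩
    | smul c x _ hx =>
      obtain ⟨p, hp⟩ := hx
      refine ⟨c • p, ?_⟩
      rw [mul_smul_comm, ← hp]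
      exact map_smul (IsScalarTower.toAlgHom ℝ P F) c p
  have hq1 : algebraMap P F q ≠ 0 := by simpa using hq0
  have hq2 (u : F) (hu : u ∈ U) : ∃ p : P, algebraMap P F p =
      algebraMap P F q * algebraMap P F q * u := by
    obtain ⟨p, hp⟩ := hq u hu
    exact ⟨q * p, by rw [map_mul, hp, mul_assoc]⟩
  obtain ⟨p, hp⟩ := hq2 f f.2
  have hpn : ¬ IsSumSq (algebraMap P F p) := by
    intro h
    apply hf
    change IsSumSq (f : F)
    have e : (f : F) = (algebraMap P F q)⁻¹ * (algebraMap P F q)⁻¹ * algebraMap P F p := by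
      rw [hp, ← mul_inv, inv_mul_cancel_left₀ (mul_ne_zero hq1 hq1)]
    rw [e]
    exact (IsSumSq.mul_self _).mul h
  obtain ⟨a, ha⟩ := exists_eval_neg_of_not_isSumSq hpn
  obtain ⟨l, hl⟩ := LinearMap.exists_leftInverse_of_injective
    (IsScalarTower.toAlgHom ℝ P F).toLinearMap
    (LinearMap.ker_eq_bot.2 (IsFractionRing.injective P F))
  have hl' (g : P) : l (algebraMap P F g) = g := LinearMap.congr_fun hl g
  -- the functional `u ↦ (q² u)(a)`
  let L : U →ₗ[ℝ] ℝ := (aeval (R := ℝ) a).toLinearMap ∘ₗ l ∘ₗ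
    LinearMap.mulLeft ℝ (algebraMap P F q * algebraMap P F q) ∘ₗ U.subtype
  have hL (u : U) (g : P) (hg : algebraMap P F g = algebraMap P F q * algebraMap P F q * u) :
      L u = eval a g := by
    change aeval a (l (algebraMap P F q * algebraMap P F q * u)) = _
    rw [← hg, hl', MvPolynomial.aeval_eq_eval]
  refine ⟨{u | L u < 0}, fun u hu hsos => ?_, isOpen_weakTop_neg L, ?_⟩
  · obtain ⟨g, hg⟩ := hq2 u u.2
    replace hu : L u < 0 := hu
    rw [hL u g hg] at hu
    refine absurd (eval_nonneg_of_isSumSq ?_ a) hu.not_ge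
    change IsSumSq (algebraMap P F g)
    rw [hg]
    exact (IsSumSq.mul_self _).mul hsos
  · change L f < 0
    rwa [hL f p hp]

end Closedness

end
end

section
/- For any preordering T on any commutative unital ℝ-algebra E, the closure of T in the finest locally convex topology on E is again a preordering; that is, the set of elements x ∈ E such that L(x) ≥ 0 for every linear functional L on E with L(T) ⊆ [0,∞) is closed under addition and multiplication and contains all squares of E. -/
open MvPolynomial MeasureTheory

noncomputable section

/-- The closure of a preordering in the finest locally convex topology
(described dually: all `x` with `L x ≥ 0` for every linear functional `L` nonnegative on
`T`) is again a preordering. -/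
theorem dualClosure_preordering_is_preordering
    {E : Type*} [CommRing E] [Algebra ℝ E] (T : Set E)
    (hsq : ∀ a : E, a ^ 2 ∈ T)
    (hadd : ∀ a ∈ T, ∀ b ∈ T, a + b ∈ T)
    (hmul : ∀ a ∈ T, ∀ b ∈ T, a * b ∈ T) :
    (∀ a : E, a ^ 2 ∈ dualClosure T) ∧
    (∀ a ∈ dualClosure T, ∀ b ∈ dualClosure T, a + b ∈ dualClosure T) ∧
    (∀ a ∈ dualClosure T, ∀ b ∈ dualClosure T, a * b ∈ dualClosure T) := by
  refine ⟨fun a L hL => hL _ (hsq a), fun a ha b hb L hL => ?_, fun a ha b hb L hL => ?_⟩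
  · rw [map_add]
    exact add_nonneg (ha L hL) (hb L hL)
  · -- `c ↦ L (a * c)` is nonnegative on `T`, because for each `t ∈ T` the functional
    -- `c ↦ L (t * c)` is nonnegative on `T` and hence at `a`.
    refine hb (L ∘ₗ LinearMap.mulLeft ℝ a) fun t ht => ?_
    have h := ha (L ∘ₗ LinearMap.mulLeft ℝ t) fun c hc => hL _ (hmul t ht c hc)
    simpa [mul_comm] using h

end
end

section
/- Let D ⊆ ℝ[X₁,…,Xₙ]\{0} be a multiplicatively closed set with 1 ∈ D and E = D⁻¹ℝ[X₁,…,Xₙ]. Let 𝒳 ⊆ ℝⁿ be such that 𝒳 \ Z(d) is dense in 𝒳 for every d ∈ D. Then for every R ∈ E the following are equivalent: (1) R ⪰ 0 on 𝒳, i.e. there exist f ∈ ℝ[X₁,…,Xₙ] and d ∈ D with R = f/d and f·d ≥ 0 on 𝒳; (2) for every representation R = f/d with f ∈ ℝ[X₁,…,Xₙ] and d ∈ D, the polynomial f·d is nonnegative on 𝒳; (3) writing R = a/b in ℝ(X₁,…,Xₙ) with a,b ∈ ℝ[X₁,…,Xₙ], b ≠ 0 and gcd(a,b) = 1, the polynomial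 a·b is nonnegative on 𝒳. In particular, for all f ∈ ℝ[X₁,…,Xₙ], the image f/1 ∈ E satisfies f/1 ⪰ 0 on 𝒳 if and only if f ≥ 0 on 𝒳. -/
/-!
If `f/d = f'/d'` then `f' d' · d² = f d · d'²`, and if `f/d = a/b` in lowest terms then `d = b c`,
`f = a c`, so `f d = a b · c²`. Hence `f d ≥ 0` forces `f' d' ≥ 0` and `a b ≥ 0` wherever `d` does
not vanish, and nonnegativity on `X \ Z(d)` passes to all of `X` by density and continuity
(`nonneg_of_nonneg_off_Zset`). Conversely, cancelling the gcd of numerator and denominator gives a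
reduced representation, from which `f d = a b · c² ≥ 0`.
-/

open MvPolynomial MeasureTheory

noncomputable section

/-- The preordering generated by `g 1, …, g m` in a commutative ring: all finite sums
of elements `σ • g₁^ν₁ ⋯ g_m^ν_m` with `σ` a sum of squares and `ν ∈ {0,1}^m`. -/
def genPreordering {E : Type*} [CommRing E] {m : ℕ} (g : Fin m → E) : Set E :=
  {x | ∃ σ : (Fin m → Bool) → E, (∀ ν, IsSumSq (σ ν)) ∧
    x = ∑ ν : Fin m → Bool, σ ν * ∏ j, (if ν j then g j else 1)}

/-- The basic closed semialgebraic set determined by `g 1, …, g m`. -/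
def KS {n m : ℕ} (g : Fin m → MvPolynomial (Fin n) ℝ) : Set (Fin n → ℝ) :=
  {x | ∀ i, 0 ≤ eval x (g i)}

/-- The real zero set of a polynomial. -/
def Zset {n : ℕ} (d : MvPolynomial (Fin n) ℝ) : Set (Fin n → ℝ) :=
  {x | eval x d = 0}

/-- `Pos^E(𝒳)`: elements of the localization having a representation `f/d` with
`f·d ≥ 0 pointwise on 𝒳`. -/
def PosE {n : ℕ} (D : Submonoid (MvPolynomial (Fin n) ℝ)) (X : Set (Fin n → ℝ)) :
    Set (Localization D) :=
  {R | ∃ (f : MvPolynomial (Fin n) ℝ) (d : D), R = Localization.mk f d ∧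
    ∀ x ∈ X, 0 ≤ eval x f * eval x (d : MvPolynomial (Fin n) ℝ)}


theorem nonneg_of_nonneg_off_Zset {n : ℕ} {X : Set (Fin n → ℝ)} {d : MvPolynomial (Fin n) ℝ}
    (hX : X ⊆ closure (X \ Zset d)) (g : MvPolynomial (Fin n) ℝ)
    (h : ∀ x ∈ X, eval x d ≠ 0 → 0 ≤ eval x g) : ∀ x ∈ X, 0 ≤ eval x g := by
  intro x hx
  have hcl : IsClosed {x : Fin n → ℝ | 0 ≤ eval x g} :=
    isClosed_le continuous_const (MvPolynomial.continuous_eval g)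
  exact closure_minimal (fun y hy => h y hy.1 hy.2) hcl (hX hx)

/-- As `0 ∉ D`, the identity `b · (f/d) = a` in `D⁻¹ℝ[X]` amounts to `b f = a d` between polynomials. -/
theorem algebraMap_mul_mk_eq_iff {n : ℕ} {D : Submonoid (MvPolynomial (Fin n) ℝ)}
    (hD0 : (0 : MvPolynomial (Fin n) ℝ) ∉ D) (a b f : MvPolynomial (Fin n) ℝ) (d : D) :
    algebraMap (MvPolynomial (Fin n) ℝ) (Localization D) b * Localization.mk f d
      = algebraMap (MvPolynomial (Fin n) ℝ) (Localization D) a ↔ b * f = a * d := by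
  have hD : D ≤ nonZeroDivisors (MvPolynomial (Fin n) ℝ) :=
    le_nonZeroDivisors_of_noZeroDivisors hD0
  rw [Localization.mk_eq_mk', IsLocalization.mul_mk'_eq_mk'_of_mul,
    IsLocalization.mk'_eq_iff_eq_mul, ← map_mul]
  exact (IsLocalization.injective (Localization D) hD).eq_iff

/-- Nonnegativity of the product `f d` on `X` does not depend on the representation `f/d`. -/
theorem nonneg_of_mk_eq {n : ℕ} {D : Submonoid (MvPolynomial (Fin n) ℝ)}
    (hD0 : (0 : MvPolynomial (Fin n) ℝ) ∉ D) {X : Set (Fin n → ℝ)}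
    (hdense : ∀ d ∈ D, X ⊆ closure (X \ Zset d))
    {f f' : MvPolynomial (Fin n) ℝ} {d d' : D}
    (h : Localization.mk f d = Localization.mk f' d')
    (hf : ∀ x ∈ X, 0 ≤ eval x f * eval x (d : MvPolynomial (Fin n) ℝ)) :
    ∀ x ∈ X, 0 ≤ eval x f' * eval x (d' : MvPolynomial (Fin n) ℝ) := by
  have hcross : (d' : MvPolynomial (Fin n) ℝ) * f = f' * d := by
    rw [← algebraMap_mul_mk_eq_iff hD0, h, Localization.mk_eq_mk', mul_comm,
      IsLocalization.mk'_spec]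
  have key := nonneg_of_nonneg_off_Zset (hdense d d.2) (f' * d') ?_
  · simpa only [map_mul] using key
  intro x hx hdx
  have e := congrArg (eval x) hcross
  simp only [map_mul] at e ⊢
  have hpos : 0 < eval x (d : MvPolynomial (Fin n) ℝ) ^ 2 := by positivity
  refine nonneg_of_mul_nonneg_left (b := eval x (d : MvPolynomial (Fin n) ℝ) ^ 2) ?_ hpos
  have e2 : eval x f' * eval x (d' : MvPolynomial (Fin n) ℝ)
      * eval x (d : MvPolynomial (Fin n) ℝ) ^ 2
      = (eval x f * eval x (d : MvPolynomial (Fin n) ℝ))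
        * eval x (d' : MvPolynomial (Fin n) ℝ) ^ 2 := by
    linear_combination (-eval x (d' : MvPolynomial (Fin n) ℝ)
      * eval x (d : MvPolynomial (Fin n) ℝ)) * e
  rw [e2]
  exact mul_nonneg (hf x hx) (sq_nonneg _)

/-- Equivalent characterizations of `R ⪰ 0` on a set `𝒳` such that
`𝒳 \ Z(d)` is dense in `𝒳` for every `d ∈ D`. -/
theorem posE_characterizations
    {n : ℕ} (D : Submonoid (MvPolynomial (Fin n) ℝ))
    (hD0 : (0 : MvPolynomial (Fin n) ℝ) ∉ D)
    (X : Set (Fin n → ℝ))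
    (hdense : ∀ d ∈ D, X ⊆ closure (X \ Zset d))
    (R : Localization D) :
    ((R ∈ PosE D X) ↔
      ∀ (f : MvPolynomial (Fin n) ℝ) (d : D), R = Localization.mk f d →
        ∀ x ∈ X, 0 ≤ eval x f * eval x (d : MvPolynomial (Fin n) ℝ)) ∧
    ((R ∈ PosE D X) ↔
      ∀ a b : MvPolynomial (Fin n) ℝ, b ≠ 0 →
        (∀ c : MvPolynomial (Fin n) ℝ, c ∣ a → c ∣ b → IsUnit c) →
        algebraMap (MvPolynomial (Fin n) ℝ) (Localization D) b * R
          = algebraMap (MvPolynomial (Fin n) ℝ) (Localization D) a →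
        ∀ x ∈ X, 0 ≤ eval x a * eval x b) ∧
    (∀ f : MvPolynomial (Fin n) ℝ,
      algebraMap (MvPolynomial (Fin n) ℝ) (Localization D) f ∈ PosE D X ↔
        ∀ x ∈ X, 0 ≤ eval x f) := by
  refine ⟨⟨?_, ?_⟩, ⟨?_, ?_⟩, fun f => ⟨?_, ?_⟩⟩
  · rintro ⟨f₀, d₀, rfl, h₀⟩ f d hR
    exact nonneg_of_mk_eq hD0 hdense hR h₀
  · intro h
    induction R using Localization.induction_on with
    | H p => exact ⟨p.1, p.2, rfl, h p.1 p.2 rfl⟩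
  · rintro ⟨f, d, rfl, hf⟩ a b hb hab hR
    rw [algebraMap_mul_mk_eq_iff hD0] at hR
    have hrel : IsRelPrime b a := fun c hcb hca => hab c hca hcb
    obtain ⟨c, hc⟩ : b ∣ (d : MvPolynomial (Fin n) ℝ) :=
      hrel.dvd_of_dvd_mul_left ⟨f, hR.symm⟩
    have hfa : f = a * c := by
      apply mul_left_cancel₀ hb
      rw [hR, hc]
      ring
    have key := nonneg_of_nonneg_off_Zset (hdense d d.2) (a * b) ?_
    · simpa only [map_mul] using key
    intro x hx hdx
    have hfx := hf x hx
    rw [hc, map_mul] at hdx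
    rw [hfa, hc] at hfx
    simp only [map_mul] at hfx ⊢
    have hcx : eval x c ≠ 0 := right_ne_zero_of_mul hdx
    have hpos : 0 < eval x c ^ 2 := by positivity
    refine nonneg_of_mul_nonneg_left (b := eval x c ^ 2) ?_ hpos
    exact hfx.trans_eq (by ring)
  · intro h
    induction R using Localization.induction_on with
    | H p =>
      obtain ⟨f, d⟩ := p
      have hd : (d : MvPolynomial (Fin n) ℝ) ≠ 0 := fun h0 => hD0 (h0 ▸ d.2)
      obtain ⟨b, a, c, hrel, hb, ha⟩ :=
        UniqueFactorizationMonoid.exists_reduced_factors (d : MvPolynomial (Fin n) ℝ) hd f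
      have hb0 : b ≠ 0 := by
        rintro rfl
        exact hd (by rw [← hb, mul_zero])
      have hab := h a b hb0 (fun e hea heb => hrel heb hea) (by
        rw [algebraMap_mul_mk_eq_iff hD0, ← hb, ← ha]
        ring)
      refine ⟨f, d, rfl, fun x hx => ?_⟩
      rw [← hb, ← ha, map_mul, map_mul]
      exact (mul_nonneg (hab x hx) (sq_nonneg (eval x c))).trans_eq (by ring)
  · rintro ⟨f₀, d₀, hR, h₀⟩ x hx
    rw [← Localization.mk_one_eq_algebraMap] at hR
    simpa using nonneg_of_mk_eq hD0 hdense hR.symm h₀ x hx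
  · intro h
    refine ⟨f, 1, (Localization.mk_one_eq_algebraMap f).symm, fun x hx => ?_⟩
    simpa using h x hx

end
end

section
/- Let D ⊆ ℝ[X₁,…,Xₙ]\{0} be a multiplicatively closed set with 1 ∈ D, let K ⊆ ℝⁿ be a compact set contained in ⋃_{d∈D} Z(d), and let c > 0. Then every convex, absorbent, symmetric subset N of E = D⁻¹ℝ[X₁,…,Xₙ] (i.e., every basic zero-neighborhood in the finest locally convex topology) contains an element R such that R ⪰ c·χ_K globally, i.e., there exist f ∈ ℝ[X₁,…,Xₙ] and d ∈ D with R = f/d and (f(x) − c·χ_K(x)·d(x))·d(x) ≥ 0 for all x ∈ ℝⁿ, where χ_K is the characteristic function of K. -/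
/-!
For a single `d ∈ D`, the element `ε / d²` lies in `N` for small `ε > 0` and exceeds `c` near `Z(d)`.
To treat all of `K` at once, finitely many such elements have to be averaged, and the loss caused by
the averaging has to be controlled even though `D` may be uncountable.

The set `D` is split into countably many pieces `A(T, k)`, indexed by a finite set `T` of monomials
and `k : ℕ`: the `d ∈ D` supported in `T`, with coefficients at most `k + 1` in absolute value, and
with `(k + 1)⁻¹ / d^(2p) ∈ N`, where `p = |T| + 1`. A grid of mesh `1/s` in coefficient space shows
that `O(s^|T|)` members of `A(T, k)` suffice to approximate each `d ∈ A(T, k)` within `O(1/s)`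
uniformly on a box containing `K`. If `d(x) = 0`, the approximant `d'` has `d'(x)^(2p) = O(s^(-2p))`,
and as `2p > |T|` this beats the number of averaged elements (`exists_finset_small`). Hence the
average of `(k + 1)⁻¹ / d'^(2p)` over the approximants is as large as desired on an open set
containing `K ∩ Z(d)` for every `d ∈ A(T, k)`. Weighting the pieces by a summable sequence
`2^(-e-1)`, compactness of `K` leaves finitely many pieces, and their weighted sum is the required
element of `N`; its lower bound is `exists_mk_sum_inv_sq`.
-/

open MvPolynomial MeasureTheory Pointwise

noncomputable section

/-- A set is absorbent if every vector lies in some positive multiple of it. -/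
def IsAbsorbent {E : Type*} [AddCommGroup E] [Module ℝ E] (U : Set E) : Prop :=
  ∀ x : E, ∃ l : ℝ, 0 < l ∧ x ∈ l • U

/-- A set is symmetric if `λ • U ⊆ U` for all `λ ∈ [-1, 1]`. -/
def IsSymmetricSet {E : Type*} [AddCommGroup E] [Module ℝ E] (U : Set E) : Prop :=
  ∀ l : ℝ, l ∈ Set.Icc (-1 : ℝ) 1 → l • U ⊆ U

/-- Evaluations, at a point of the box `[-B, B]ⁿ`, of two polynomials supported in `T` differ by at
most a constant (depending on `T`, `B`) times the largest difference of their coefficients. -/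
lemma abs_eval_sub_le {n : ℕ} (T : Finset (Fin n →₀ ℕ)) (B δ : ℝ)
    (p q : MvPolynomial (Fin n) ℝ) (hp : p.support ⊆ T) (hq : q.support ⊆ T)
    (hpq : ∀ α ∈ T, |coeff α p - coeff α q| ≤ δ) (x : Fin n → ℝ) (hx : ∀ i, |x i| ≤ B) :
    |eval x p - eval x q| ≤ δ * ∑ α ∈ T, ∏ i, B ^ α i := by
  have key : ∀ r : MvPolynomial (Fin n) ℝ, r.support ⊆ T →
      eval x r = ∑ α ∈ T, coeff α r * ∏ i, x i ^ α i := by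
    intro r hr
    rw [eval_eq']
    refine Finset.sum_subset hr fun α _ hα => ?_
    rw [notMem_support_iff.mp hα, zero_mul]
  rw [key p hp, key q hq, ← Finset.sum_sub_distrib, Finset.mul_sum]
  refine (Finset.abs_sum_le_sum_abs _ _).trans (Finset.sum_le_sum fun α hα => ?_)
  rw [← sub_mul, abs_mul, Finset.abs_prod]
  have h1 : ∏ i, |x i ^ α i| ≤ ∏ i, B ^ α i := by
    refine Finset.prod_le_prod (fun i _ => abs_nonneg _) fun i _ => ?_
    rw [abs_pow]
    exact pow_le_pow_left₀ (abs_nonneg _) (hx i) _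
  exact mul_le_mul (hpq α hα) h1 (Finset.prod_nonneg fun i _ => abs_nonneg _)
    ((abs_nonneg _).trans (hpq α hα))

/-- A family of polynomials with supports in `T` and bounded coefficients has a finite subfamily `S`
such that, wherever a member of the family vanishes in the box `[-B, B]ⁿ`, some member of `S` is
small even relative to the cardinality of `S`. The exponent `|T| + 1` makes the smallness win
against the growth of the number of grid cells in coefficient space. -/
lemma exists_finset_small {n : ℕ} (T : Finset (Fin n →₀ ℕ)) (k : ℕ) (B L : ℝ) (hL : 0 < L)
    (A : Set (MvPolynomial (Fin n) ℝ)) (hT : ∀ d ∈ A, d.support ⊆ T)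
    (hk : ∀ d ∈ A, ∀ α, |coeff α d| ≤ k) :
    ∃ S : Finset (MvPolynomial (Fin n) ℝ), (S : Set (MvPolynomial (Fin n) ℝ)) ⊆ A ∧
      ∀ d ∈ A, ∀ x : Fin n → ℝ, (∀ i, |x i| ≤ B) → eval x d = 0 →
        ∃ d' ∈ S, L * S.card * (eval x d' ^ (T.card + 1)) ^ 2 < 1 := by
  classical
  set C : ℝ := ∑ α ∈ T, ∏ i, B ^ α i with hC
  set M := T.card with hM
  obtain ⟨s, hs⟩ := exists_nat_gt (max 1 (L * (2 * k + 1) ^ M * (C ^ (M + 1)) ^ 2))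
  have hs1 : (1 : ℝ) < s := (le_max_left _ _).trans_lt hs
  have hs2 := (le_max_right _ _).trans_lt hs
  have hs0 : (0 : ℝ) < s := by linarith
  -- the grid cell of mesh `1/s` containing the coefficient vector
  let cell : MvPolynomial (Fin n) ℝ → (T → ℤ) := fun d α => ⌊(s : ℝ) * coeff α.1 d⌋
  let box : Finset (T → ℤ) := Fintype.piFinset fun _ => Finset.Ico (-(k * s : ℤ)) (k * s + 1)
  have hbox : ∀ d ∈ A, cell d ∈ box := by
    intro d hd
    simp only [box, cell, Fintype.mem_piFinset, Finset.mem_Ico]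
    intro α
    have h := abs_le.mp (hk d hd α.1)
    constructor
    · rw [Int.le_floor]
      push_cast
      nlinarith
    · rw [Int.floor_lt]
      push_cast
      nlinarith
  have hcard : box.card = (2 * k * s + 1) ^ M := by
    simp only [box, Fintype.card_piFinset, Int.card_Ico, Finset.prod_const, Finset.card_univ,
      Fintype.card_coe]
    congr 1
    have : (k * s + 1 - -(k * s) : ℤ) = ((2 * k * s + 1 : ℕ) : ℤ) := by push_cast; ring
    rw [this, Int.toNat_natCast]
  obtain ⟨S', hS'A, hbij⟩ := Set.exists_subset_bijOn A cell
  have himg : cell '' A ⊆ (box : Set (T → ℤ)) := by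
    rintro _ ⟨d, hd, rfl⟩
    exact hbox d hd
  have hfin : S'.Finite := hbij.finite_iff_finite.mpr (box.finite_toSet.subset himg)
  refine ⟨hfin.toFinset, by simpa using hS'A, ?_⟩
  have hScard : hfin.toFinset.card ≤ (2 * k * s + 1) ^ M := by
    rw [← hcard]
    refine Finset.card_le_card_of_injOn cell (fun d hd => ?_) ?_
    · exact hbox d (hS'A (by simpa using hd))
    · simpa using hbij.injOn
  intro d hd x hx hdx
  obtain ⟨d', hd', hcell⟩ := hbij.surjOn (Set.mem_image_of_mem cell hd)
  refine ⟨d', by simpa using hd', ?_⟩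
  have hclose : |eval x d' - eval x d| ≤ (s : ℝ)⁻¹ * C := by
    refine abs_eval_sub_le T B _ d' d (hT _ (hS'A hd')) (hT _ hd) (fun α hα => ?_) x hx
    have h := Int.abs_sub_lt_one_of_floor_eq_floor (congrFun hcell ⟨α, hα⟩)
    simp only [← mul_sub, abs_mul, Nat.abs_cast] at h
    rw [inv_eq_one_div, le_div_iff₀ hs0]
    linarith
  rw [hdx, sub_zero] at hclose
  have hpow : (eval x d' ^ (M + 1)) ^ 2 ≤ (((s : ℝ)⁻¹ * C) ^ (M + 1)) ^ 2 := by
    rw [← sq_abs, abs_pow]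
    gcongr
  have hcardR : (hfin.toFinset.card : ℝ) ≤ ((2 * k + 1) * s) ^ M := by
    have : (hfin.toFinset.card : ℝ) ≤ (2 * k * s + 1) ^ M := by exact_mod_cast hScard
    refine this.trans (pow_le_pow_left₀ (by positivity) ?_ _)
    nlinarith
  calc L * hfin.toFinset.card * (eval x d' ^ (M + 1)) ^ 2
      ≤ L * ((2 * k + 1) * s) ^ M * (((s : ℝ)⁻¹ * C) ^ (M + 1)) ^ 2 := by gcongr
    _ = (L * (2 * k + 1) ^ M * (C ^ (M + 1)) ^ 2) * ((s : ℝ) ^ (M + 2))⁻¹ := by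
        rw [mul_pow, mul_pow, inv_pow]
        field_simp
        ring
    _ < s * ((s : ℝ) ^ (M + 2))⁻¹ := by gcongr
    _ ≤ 1 := by
        rw [mul_inv_le_iff₀ (by positivity), one_mul]
        exact le_self_pow₀ hs1.le (by omega)

/-- A finite sum `∑ wⱼ / gⱼ²` has a representation `f / d` with `f, d ≥ 0` pointwise whose value is
at least `c` at every point where a single summand is; both bounds make sense at the poles because
they are stated without division. -/
lemma exists_mk_sum_inv_sq {n : ℕ} (D : Submonoid (MvPolynomial (Fin n) ℝ)) (c : ℝ)
    {ι : Type*} (J : Finset ι) (w : ι → ℝ) (hw : ∀ j ∈ J, 0 ≤ w j) (g : ι → D) :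
    ∃ (f : MvPolynomial (Fin n) ℝ) (d : D),
      ∑ j ∈ J, w j • Localization.mk (1 : MvPolynomial (Fin n) ℝ) (g j ^ 2) =
        Localization.mk f d ∧
      ∀ x : Fin n → ℝ, 0 ≤ eval x f ∧ 0 ≤ eval x (d : MvPolynomial (Fin n) ℝ) ∧
        ((∃ j ∈ J, c * eval x (g j : MvPolynomial (Fin n) ℝ) ^ 2 ≤ w j) →
          c * eval x (d : MvPolynomial (Fin n) ℝ) ≤ eval x f) := by
  classical
  induction J using Finset.induction_on with
  | empty => exact ⟨0, 1, by simp [Localization.mk_zero], fun x => by simp⟩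
  | insert a J ha ih =>
    obtain ⟨f, d, hfd, h⟩ := ih fun j hj => hw j (Finset.mem_insert_of_mem hj)
    have hwa := hw a (Finset.mem_insert_self a J)
    refine ⟨C (w a) * (d : MvPolynomial (Fin n) ℝ) +
      f * (g a : MvPolynomial (Fin n) ℝ) ^ 2, g a ^ 2 * d, ?_, fun x => ?_⟩
    · rw [Finset.sum_insert ha, hfd, Localization.smul_mk, Localization.add_mk]
      congr 1
      simp only [smul_eq_C_mul, SubmonoidClass.coe_pow]
      ring
    · obtain ⟨hf, hd, hj⟩ := h x
      simp only [map_add, map_mul, map_pow, eval_C, Submonoid.coe_mul, SubmonoidClass.coe_pow]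
      refine ⟨by positivity, by positivity, ?_⟩
      rintro ⟨j, hjJ, hjx⟩
      rcases Finset.mem_insert.mp hjJ with rfl | hjJ
      · have := mul_le_mul_of_nonneg_right hjx hd
        have : 0 ≤ eval x f * eval x (g j : MvPolynomial (Fin n) ℝ) ^ 2 := by positivity
        linarith
      · have := mul_le_mul_of_nonneg_right (hj ⟨j, hjJ, hjx⟩)
          (sq_nonneg (eval x (g a : MvPolynomial (Fin n) ℝ)))
        have : 0 ≤ w a * eval x (d : MvPolynomial (Fin n) ℝ) := by positivity
        linarith

/-- A convex set containing `0` is closed under combinations of total weight at most `1`. -/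
lemma sum_smul_mem_of_sum_le_one {E ι : Type*} [AddCommGroup E] [Module ℝ E] {N : Set E}
    (hconv : Convex ℝ N) (h0 : (0 : E) ∈ N) (J : Finset ι) (w : ι → ℝ) (y : ι → E)
    (hw : ∀ j ∈ J, 0 ≤ w j) (hsum : ∑ j ∈ J, w j ≤ 1) (hy : ∀ j ∈ J, y j ∈ N) :
    ∑ j ∈ J, w j • y j ∈ N := by
  rcases (Finset.sum_nonneg hw).eq_or_lt with h | h
  · have hz := (Finset.sum_eq_zero_iff_of_nonneg hw).mp h.symm
    rw [Finset.sum_eq_zero fun j hj => by rw [hz j hj, zero_smul]]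
    exact h0
  · have hm := hconv.centerMass_mem hw h hy
    have := hconv.smul_mem_of_zero_mem h0 hm ⟨h.le, hsum⟩
    rwa [Finset.centerMass, smul_smul, mul_inv_cancel₀ h.ne', one_smul] at this

/-- If `K` is a compact subset of `⋃_{d ∈ D} Z(d)` and `c > 0`, then
every convex, absorbent, symmetric subset of `D⁻¹ℝ[X]` contains an element `R` with
`R ⪰ c·χ_K` globally. -/
theorem basic_neighborhood_contains_large_element
    {n : ℕ} (D : Submonoid (MvPolynomial (Fin n) ℝ))
    (hD0 : (0 : MvPolynomial (Fin n) ℝ) ∉ D)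
    (K : Set (Fin n → ℝ)) (hKc : IsCompact K)
    (hKZ : K ⊆ ⋃ d ∈ (D : Set (MvPolynomial (Fin n) ℝ)), Zset d)
    (c : ℝ) (hc : 0 < c)
    (N : Set (Localization D))
    (hconv : Convex ℝ N) (habs : IsAbsorbent N) (hsym : IsSymmetricSet N) :
    ∃ R ∈ N, ∃ (f : MvPolynomial (Fin n) ℝ) (d : D),
      R = Localization.mk f d ∧
      ∀ x : Fin n → ℝ,
        0 ≤ (eval x f - c * Set.indicator K 1 x * eval x (d : MvPolynomial (Fin n) ℝ))
              * eval x (d : MvPolynomial (Fin n) ℝ) := by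
  classical
  have h0 : (0 : Localization D) ∈ N := by
    obtain ⟨l, _, y, hy, _⟩ := habs 0
    have := hsym 0 (by norm_num) (Set.smul_mem_smul_set hy)
    rwa [zero_smul] at this
  have hscale : ∀ y : Localization D, ∃ l : ℝ, 0 < l ∧ ∀ k : ℝ, l ≤ k → k⁻¹ • y ∈ N := by
    intro y
    obtain ⟨l, hl, z, hz, rfl⟩ := habs y
    refine ⟨l, hl, fun k hk => ?_⟩
    have hk0 : 0 < k := hl.trans_le hk
    change k⁻¹ • l • z ∈ N
    rw [smul_smul]
    refine hconv.smul_mem_of_zero_mem h0 hz ⟨by positivity, ?_⟩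
    rw [inv_mul_le_iff₀ hk0]
    linarith
  obtain ⟨B, hB⟩ : ∃ B : ℝ, ∀ x ∈ K, ∀ i, |x i| ≤ B := by
    obtain ⟨B, hB⟩ := hKc.isBounded.exists_norm_le
    exact ⟨B, fun x hx i => (norm_le_pi_norm x i).trans (hB x hx)⟩
  let _ : Encodable (Finset (Fin n →₀ ℕ) × ℕ) := Encodable.ofCountable _
  let ω : Finset (Fin n →₀ ℕ) × ℕ → ℝ := fun i => (1 / 2 : ℝ) ^ (Encodable.encode i + 1)
  have hω : ∀ i, 0 < ω i := fun i => by positivity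
  have hωsum : ∀ F : Finset (Finset (Fin n →₀ ℕ) × ℕ), ∑ i ∈ F, ω i ≤ 1 := by
    intro F
    have h2 : HasSum (fun m : ℕ => (1 / 2 : ℝ) ^ (m + 1)) 1 := by
      simpa [pow_succ, div_eq_mul_inv] using hasSum_geometric_two.mul_right (1 / 2 : ℝ)
    have h3 := sum_le_hasSum (F.map ⟨Encodable.encode, Encodable.encode_injective⟩)
      (fun m _ => by positivity) h2
    simpa [ω] using h3
  let A : Finset (Fin n →₀ ℕ) × ℕ → Set (MvPolynomial (Fin n) ℝ) := fun i =>
    {d | d.support ⊆ i.1 ∧ (∀ α, |coeff α d| ≤ ((i.2 + 1 : ℕ) : ℝ)) ∧ ∃ hd : d ∈ D,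
      ((i.2 + 1 : ℕ) : ℝ)⁻¹ • Localization.mk (1 : MvPolynomial (Fin n) ℝ)
        (((⟨d, hd⟩ : D) ^ (i.1.card + 1)) ^ 2) ∈ N}
  have hA : ∀ d ∈ D, ∃ i, d ∈ A i := by
    intro d hd
    obtain ⟨l, hl, hlN⟩ := hscale (Localization.mk (1 : MvPolynomial (Fin n) ℝ)
        (((⟨d, hd⟩ : D) ^ (d.support.card + 1)) ^ 2))
    obtain ⟨k, hk⟩ := exists_nat_ge (l + ∑ α ∈ d.support, |coeff α d|)
    have hS : 0 ≤ ∑ α ∈ d.support, |coeff α d| := Finset.sum_nonneg fun _ _ => abs_nonneg _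
    refine ⟨(d.support, k), Finset.Subset.refl _, fun α => ?_, hd, hlN _ ?_⟩
    · push_cast
      by_cases hα : α ∈ d.support
      · have := Finset.single_le_sum (f := fun α => |coeff α d|)
          (fun _ _ => abs_nonneg _) hα
        linarith
      · rw [notMem_support_iff.mp hα, abs_zero]
        positivity
    · push_cast
      linarith
  have hex := fun i => exists_finset_small i.1 (i.2 + 1) B (c * (i.2 + 1 : ℕ) / ω i)
    (by have := hω i; positivity) (A i) (fun d hd => hd.1) (fun d hd => hd.2.1)
  choose S hSA hS using hex
  let O : Finset (Fin n →₀ ℕ) × ℕ → Set (Fin n → ℝ) := fun i =>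
    ⋃ d ∈ S i, {x | c * (i.2 + 1 : ℕ) / ω i * (S i).card * (eval x d ^ (i.1.card + 1)) ^ 2 < 1}
  have hO : ∀ i, IsOpen (O i) := by
    intro i
    refine isOpen_biUnion fun d _ => isOpen_lt ?_ continuous_const
    exact continuous_const.mul (((MvPolynomial.continuous_eval d).pow _).pow _)
  have hKO : K ⊆ ⋃ i, O i := by
    intro x hx
    obtain ⟨d, hd, hdx⟩ := Set.mem_iUnion₂.mp (hKZ hx)
    obtain ⟨i, hi⟩ := hA d hd
    obtain ⟨d', hd', h⟩ := hS i d hi x (hB x hx) hdx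
    exact Set.mem_iUnion.mpr ⟨i, Set.mem_iUnion₂.mpr ⟨d', hd', h⟩⟩
  obtain ⟨F, hF⟩ := hKc.elim_finite_subcover O hO hKO
  let J : Finset ((_ : Finset (Fin n →₀ ℕ) × ℕ) × MvPolynomial (Fin n) ℝ) := F.sigma S
  -- outside of `D` the value of `g` is irrelevant
  let g : ((_ : Finset (Fin n →₀ ℕ) × ℕ) × MvPolynomial (Fin n) ℝ) → D := fun j =>
    if hd : j.2 ∈ D then (⟨j.2, hd⟩ : D) ^ (j.1.1.card + 1) else 1
  let u : ((_ : Finset (Fin n →₀ ℕ) × ℕ) × MvPolynomial (Fin n) ℝ) → ℝ := fun j =>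
    ω j.1 * ((S j.1).card : ℝ)⁻¹
  have hu : ∀ j ∈ J, 0 ≤ u j := fun j _ => by have := hω j.1; positivity
  have husum : ∑ j ∈ J, u j ≤ 1 := by
    rw [Finset.sum_sigma]
    refine (Finset.sum_le_sum fun i _ => ?_).trans (hωsum F)
    simp only [u, Finset.sum_const, nsmul_eq_mul]
    rw [mul_left_comm]
    exact mul_le_of_le_one_right (hω i).le mul_inv_le_one
  have hmem := sum_smul_mem_of_sum_le_one hconv h0 J u
    (fun j => ((j.1.2 + 1 : ℕ) : ℝ)⁻¹ • Localization.mk (1 : MvPolynomial (Fin n) ℝ) (g j ^ 2))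
    hu husum (by
      intro j hj
      obtain ⟨_, _, hd, h⟩ := hSA j.1 (Finset.mem_sigma.mp hj).2
      simpa only [g, dif_pos hd] using h)
  simp only [smul_smul] at hmem
  obtain ⟨f, d, hfd, h⟩ := exists_mk_sum_inv_sq D c J
    (fun j => u j * ((j.1.2 + 1 : ℕ) : ℝ)⁻¹)
    (fun j hj => mul_nonneg (hu j hj) (by positivity)) g
  refine ⟨_, hmem, f, d, hfd, fun x => ?_⟩
  obtain ⟨hf, hd, hj⟩ := h x
  refine mul_nonneg ?_ hd
  by_cases hx : x ∈ K
  · rw [Set.indicator_of_mem hx, Pi.one_apply, mul_one, sub_nonneg]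
    apply hj
    obtain ⟨i, hi, hxi⟩ := Set.mem_iUnion₂.mp (hF hx)
    obtain ⟨d', hd', hlt⟩ := Set.mem_iUnion₂.mp hxi
    refine ⟨⟨i, d'⟩, Finset.mem_sigma.mpr ⟨hi, hd'⟩, ?_⟩
    obtain ⟨_, _, hdD, _⟩ := hSA i hd'
    have hcard : (0 : ℝ) < (S i).card := by exact_mod_cast Finset.card_pos.mpr ⟨d', hd'⟩
    have hωi := hω i
    have hk : (0 : ℝ) < (i.2 + 1 : ℕ) := by positivity
    simp only [g, dif_pos hdD, u, SubmonoidClass.coe_pow, map_pow]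
    simp only [Set.mem_ofPred_eq] at hlt
    rw [← div_eq_mul_inv, ← div_eq_mul_inv, le_div_iff₀ hk, le_div_iff₀ hcard]
    rw [div_mul_eq_mul_div, div_mul_eq_mul_div, div_lt_one hωi] at hlt
    linarith
  · rw [Set.indicator_of_notMem hx]
    simpa using hf

end
end
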